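/- arXiv:1905.04785 — 7 statements merged into one kernel-verified Lean document; each statement's English description precedes it below -/
import Mathlib

section
/- Let n ≥ 3 be an integer. Define an equivalence relation ≡_S on the set X_n of bijections x : Fin n → ZMod n by declaring x ≡_S y if and only if there exist k : ZMod n, a sign ε ∈ {1, -1} ⊆ ZMod n, and a Boolean b such that for all i : Fin n, y i = ε * x (ρ_b i) + k, where ρ_b is the identity on Fin n if b is false and the reversal i ↦ n - 1 - i if b is true. Then the number of equivalence classes of X_n under ≡_S equals (1/4) * ((n-1)! + (if n is even then (n/2 + 1) * (n-2)!! else (n-1)!!)). -/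
open Nat

/-!
Rotations and reflections of the circle form the dihedral group `D` of order `2n` acting on
`ZMod n`, and reversal is an involution of `Fin n`, so the classes are the orbits of `D × ℤ/2` on
the bijections `Fin n ≃ ZMod n`; they are counted with Burnside's lemma. A bijection is fixed by
`(g, h)` iff it conjugates `h` to `g`. For `h = 1` this forces `g = 1`, which contributes `n!`. For
`h` the reversal, `g` must itself be an involution with at most one fixed point, and then the
bijections are as numerous as the centralizer of the reversal, of order `2 ^ (n / 2) * (n / 2)!`.
Such `g` are the `n` reflections when `n` is odd; they are the half turn and the `n / 2` reflections
without fixed points when `n` is even.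
-/

section Semiconj

variable {α β : Type*}

theorem eq_permCongr_of_semiconj {f : α ≃ β} {σ : Equiv.Perm α} {τ : Equiv.Perm β}
    (h : Function.Semiconj f σ τ) : τ = f.permCongr σ := by
  ext b
  simpa using (h (f.symm b)).symm

theorem nat_card_semiconj_eq_nat_card_centralizer {f : α ≃ β} {σ : Equiv.Perm α}
    {τ : Equiv.Perm β} (hf : Function.Semiconj f σ τ) :
    Nat.card {e : α ≃ β // Function.Semiconj e σ τ} =
      Nat.card (Subgroup.centralizer ({σ} : Set (Equiv.Perm α))) := by
  refine (Nat.card_congr (Equiv.subtypeEquiv (Equiv.equivCongr (Equiv.refl α) f) fun p => ?_)).symm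
  rw [Subgroup.mem_centralizer_singleton_iff, Equiv.ext_iff]
  refine forall_congr' fun a => ?_
  simp [← hf.eq, eq_comm]

theorem semiconj_one_iff (e : α ≃ β) (τ : Equiv.Perm β) :
    Function.Semiconj e (1 : Equiv.Perm α) τ ↔ τ = 1 := by
  rw [Equiv.ext_iff, ← e.forall_congr_right]
  simp [Function.Semiconj, eq_comm]

variable [Fintype α] [Fintype β] [DecidableEq β]

theorem nat_card_semiconj_one (e : α ≃ β) (τ : Equiv.Perm β) :
    Nat.card {f : α ≃ β // Function.Semiconj f (1 : Equiv.Perm α) τ} =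
      if τ = 1 then (Fintype.card α)! else 0 := by
  classical
  simp only [semiconj_one_iff]
  split_ifs with h
  · simp [h, Fintype.card_equiv e]
  · simp [h]

variable [DecidableEq α]

theorem cycleType_permCongr (f : α ≃ β) (σ : Equiv.Perm α) :
    (f.permCongr σ).cycleType = σ.cycleType := by
  let f' : α ≃ {_b : β // True} := f.trans (Equiv.subtypeUnivEquiv fun _ => trivial).symm
  have hext : σ.extendDomain f' = f.permCongr σ := by
    ext b
    exact Equiv.Perm.extendDomain_apply_subtype σ f' trivial
  rw [← hext, Equiv.Perm.cycleType_extendDomain]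

theorem exists_semiconj_iff_cycleType_eq (e : α ≃ β) {σ : Equiv.Perm α} {τ : Equiv.Perm β} :
    (∃ f : α ≃ β, Function.Semiconj f σ τ) ↔ σ.cycleType = τ.cycleType := by
  constructor
  · rintro ⟨f, hf⟩
    rw [eq_permCongr_of_semiconj hf, cycleType_permCongr]
  · intro h
    have hconj : IsConj (e.permCongr σ) τ := by
      rwa [Equiv.Perm.isConj_iff_cycleType_eq, cycleType_permCongr]
    obtain ⟨c, hc⟩ := isConj_iff.1 hconj
    refine ⟨e.trans c, fun a => ?_⟩
    simp [← hc]

end Semiconj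

section Pairing

/-- An involution with at most one fixed point, that is, a partition of `α` into pairs with at most
one point left over. -/
def IsPairing {α : Type*} (f : α → α) : Prop :=
  Function.Involutive f ∧ (Function.fixedPoints f).Subsingleton

theorem isPairing_rev (n : ℕ) : IsPairing (Fin.rev : Fin n → Fin n) := by
  refine ⟨Fin.rev_involutive, fun i hi j hj => ?_⟩
  simp only [Function.mem_fixedPoints, Function.IsFixedPt, Fin.ext_iff, Fin.val_rev] at hi hj
  omega

theorem pow_two_eq_one_iff_involutive {α : Type*} (σ : Equiv.Perm α) :
    σ ^ 2 = 1 ↔ Function.Involutive σ := by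
  simp [Equiv.ext_iff, pow_two, Function.Involutive]

variable {α β : Type*}

theorem fixedPoints_subsingleton_iff_card_le [Fintype α] [DecidableEq α] (σ : Equiv.Perm α) :
    (Function.fixedPoints σ).Subsingleton ↔ Fintype.card α ≤ σ.support.card + 1 := by
  have hcoe : Function.fixedPoints σ = ↑σ.supportᶜ := by ext a; simp [Function.IsFixedPt]
  rw [hcoe, ← Finset.card_le_one_iff_subsingleton, Finset.card_compl]
  omega

theorem isPairing_iff_cycleType_eq [Fintype α] [DecidableEq α] (σ : Equiv.Perm α) :
    IsPairing σ ↔ σ.cycleType = Multiset.replicate (Fintype.card α / 2) 2 := by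
  have hle := σ.support.card_le_univ
  have hsum := σ.sum_cycleType
  rw [IsPairing, fixedPoints_subsingleton_iff_card_le, ← pow_two_eq_one_iff_involutive,
    Equiv.Perm.pow_prime_eq_one_iff, Multiset.eq_replicate, and_comm]
  refine and_congr_left fun hall => ?_
  rw [Multiset.eq_replicate_card.2 hall, Multiset.sum_replicate, smul_eq_mul] at hsum
  omega

theorem nat_card_centralizer_of_isPairing [Fintype α] {σ : Equiv.Perm α} (hσ : IsPairing σ) :
    Nat.card (Subgroup.centralizer ({σ} : Set (Equiv.Perm α))) =
      2 ^ (Fintype.card α / 2) * (Fintype.card α / 2)! := by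
  classical
  rw [Equiv.Perm.nat_card_centralizer, (isPairing_iff_cycleType_eq σ).1 hσ]
  have hleftover : (Fintype.card α - Fintype.card α / 2 * 2)! = 1 :=
    Nat.factorial_eq_one.2 (by omega)
  simp only [Multiset.sum_replicate, Multiset.prod_replicate, smul_eq_mul, hleftover, one_mul]
  rcases eq_or_ne (Fintype.card α / 2) 0 with h | h
  · simp [h]
  · simp [Multiset.toFinset_replicate, h]

theorem exists_semiconj_iff_isPairing [Finite α] (e : α ≃ β) {σ : Equiv.Perm α}
    (hσ : IsPairing σ) (τ : Equiv.Perm β) :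
    (∃ f : α ≃ β, Function.Semiconj f σ τ) ↔ IsPairing τ := by
  classical
  have : Fintype α := Fintype.ofFinite α
  have : Fintype β := Fintype.ofEquiv α e
  rw [exists_semiconj_iff_cycleType_eq e, isPairing_iff_cycleType_eq τ,
    (isPairing_iff_cycleType_eq σ).1 hσ, Fintype.card_congr e, eq_comm]

open Classical in
theorem nat_card_semiconj_of_isPairing [Fintype α] (e : α ≃ β) {σ : Equiv.Perm α}
    (hσ : IsPairing σ) (τ : Equiv.Perm β) :
    Nat.card {f : α ≃ β // Function.Semiconj f σ τ} =
      if IsPairing τ then 2 ^ (Fintype.card α / 2) * (Fintype.card α / 2)! else 0 := by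
  rw [← exists_semiconj_iff_isPairing e hσ]
  split_ifs with h
  · obtain ⟨f, hf⟩ := h
    rw [nat_card_semiconj_eq_nat_card_centralizer hf, nat_card_centralizer_of_isPairing hσ]
  · simp [not_exists.1 h]

end Pairing

section EquivAction

variable {G H α β : Type*} [Group G] [Group H] [MulAction G β] [MulAction H α]

/-- A pair `(g, h)` acts on bijections `α ≃ β` by `e ↦ g ∘ e ∘ h⁻¹`. -/
instance equivProdMulAction : MulAction (G × H) (α ≃ β) where
  smul g e := (MulAction.toPerm g.2).symm.trans (e.trans (MulAction.toPerm g.1))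
  one_smul e := by
    ext a
    change (1 : G) • e ((1 : H)⁻¹ • a) = e a
    simp
  mul_smul g g' e := by
    ext a
    change (g.1 * g'.1) • e ((g.2 * g'.2)⁻¹ • a) = g.1 • g'.1 • e (g'.2⁻¹ • g.2⁻¹ • a)
    simp [mul_smul]

theorem prod_smul_equiv_apply (g : G) (h : H) (e : α ≃ β) (a : α) :
    ((g, h) • e) a = g • e (h⁻¹ • a) := rfl

theorem mem_fixedBy_prod_iff_semiconj {g : G} {h : H} {e : α ≃ β} :
    e ∈ MulAction.fixedBy (α ≃ β) (g, h) ↔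
      Function.Semiconj e (MulAction.toPerm h) (MulAction.toPerm g : Equiv.Perm β) := by
  rw [MulAction.mem_fixedBy, Equiv.ext_iff, ← (MulAction.toPerm h).forall_congr_right]
  simp [prod_smul_equiv_apply, Function.Semiconj, eq_comm]

end EquivAction

section Involution

variable {α : Type*} {σ : Equiv.Perm α}

theorem mem_zpowers_iff_of_involutive (hσ : Function.Involutive σ) (τ : Equiv.Perm α) :
    τ ∈ Subgroup.zpowers σ ↔ τ = 1 ∨ τ = σ := by
  refine ⟨?_, by rintro (rfl | rfl) <;> simp [one_mem]⟩
  rintro ⟨k, rfl⟩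
  have hsq : σ ^ (2 : ℤ) = 1 := mod_cast (pow_two_eq_one_iff_involutive σ).2 hσ
  obtain ⟨j, rfl | rfl⟩ := k.even_or_odd'
  · simp [zpow_mul, hsq]
  · simp [zpow_add, zpow_mul, hsq]

theorem sum_zpowers_of_involutive [Fintype (Subgroup.zpowers σ)] {M : Type*} [AddCommMonoid M]
    (hσ : Function.Involutive σ) (hσ1 : σ ≠ 1) (F : Equiv.Perm α → M) :
    ∑ h : Subgroup.zpowers σ, F h = F 1 + F σ := by
  classical
  rw [← Finset.sum_pair hσ1.symm]
  refine (Finset.sum_subtype _ (fun τ => ?_) F).symm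
  simp [mem_zpowers_iff_of_involutive hσ]

theorem card_zpowers_of_involutive [Fintype (Subgroup.zpowers σ)] (hσ : Function.Involutive σ)
    (hσ1 : σ ≠ 1) : Fintype.card (Subgroup.zpowers σ) = 2 := by
  rw [← Nat.card_eq_fintype_card, Nat.card_zpowers]
  exact orderOf_eq_prime ((pow_two_eq_one_iff_involutive σ).2 hσ) hσ1

end Involution

section OrbitCount

variable {G α β : Type*} [Group G] [Fintype G] [MulAction G β] {σ : Equiv.Perm α}

theorem nat_card_orbits_mul_eq_sum [Finite α] [Finite β] (hσ : Function.Involutive σ)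
    (hσ1 : σ ≠ 1) :
    Nat.card (MulAction.orbitRel.Quotient (G × Subgroup.zpowers σ) (α ≃ β)) *
        (2 * Fintype.card G) =
      ∑ g : G, (Nat.card {e : α ≃ β //
          Function.Semiconj e (1 : Equiv.Perm α) (MulAction.toPerm g : Equiv.Perm β)} +
        Nat.card {e : α ≃ β // Function.Semiconj e σ (MulAction.toPerm g : Equiv.Perm β)}) := by
  classical
  have : Fintype α := Fintype.ofFinite α
  have : Fintype (α ≃ β) := Fintype.ofFinite _
  have burnside := MulAction.sum_card_fixedBy_eq_card_orbits_mul_card_group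
    (G × Subgroup.zpowers σ) (α ≃ β)
  rw [Fintype.card_prod, card_zpowers_of_involutive hσ hσ1, mul_comm _ 2] at burnside
  rw [Nat.card_eq_fintype_card, ← burnside, Fintype.sum_prod_type]
  refine Finset.sum_congr rfl fun g _ => ?_
  rw [← sum_zpowers_of_involutive hσ hσ1 fun τ : Equiv.Perm α =>
    Nat.card {e : α ≃ β // Function.Semiconj e τ (MulAction.toPerm g : Equiv.Perm β)}]
  refine Finset.sum_congr rfl fun h _ => ?_
  rw [← Nat.card_eq_fintype_card]
  exact Nat.card_congr (Equiv.subtypeEquivRight fun e => mem_fixedBy_prod_iff_semiconj)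

theorem nat_card_orbits_mul_eq_of_isPairing [Fintype α] [FaithfulSMul G β] (e : α ≃ β)
    (hσ : IsPairing σ) (hσ1 : σ ≠ 1) :
    Nat.card (MulAction.orbitRel.Quotient (G × Subgroup.zpowers σ) (α ≃ β)) *
        (2 * Fintype.card G) =
      (Fintype.card α)! + Nat.card {g : G // IsPairing (g • · : β → β)} *
        (2 ^ (Fintype.card α / 2) * (Fintype.card α / 2)!) := by
  classical
  have : Fintype β := Fintype.ofEquiv α e
  have toPerm_eq_one (g : G) : (MulAction.toPerm g : Equiv.Perm β) = 1 ↔ g = 1 :=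
    map_eq_one_iff (MulAction.toPermHom G β) MulAction.toPerm_injective
  rw [nat_card_orbits_mul_eq_sum hσ.1 hσ1]
  simp only [nat_card_semiconj_one e, nat_card_semiconj_of_isPairing e hσ, toPerm_eq_one]
  rw [Finset.sum_add_distrib, Finset.sum_ite_eq' Finset.univ (1 : G), ← Finset.sum_filter,
    Finset.sum_const, smul_eq_mul, Nat.card_eq_fintype_card, Fintype.card_subtype]
  simp only [Finset.mem_univ, if_true]
  rfl

end OrbitCount

section Dihedral

variable {n : ℕ}

/-- The action of the dihedral group on the vertices of the `n`-gon: `r k` is the rotation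
`a ↦ a + k`, and `sr k` is the reflection `a ↦ -a - k`, the sign of `k` being dictated by the
multiplication of `DihedralGroup`. -/
instance dihedralMulAction : MulAction (DihedralGroup n) (ZMod n) where
  smul
    | .r k, a => a + k
    | .sr k, a => -a - k
  one_smul := add_zero
  mul_smul
    | .r _, .r _, _ => by change _ + _ = _ + _ + _; ring
    | .r _, .sr _, _ => by change -_ - _ = -_ - _ + _; ring
    | .sr _, .r _, _ => by change -_ - _ = -(_ + _) - _; ring
    | .sr _, .sr _, _ => by change _ + _ = -(-_ - _) - _; ring

theorem r_smul (k a : ZMod n) : DihedralGroup.r k • a = a + k := rfl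

theorem sr_smul (k a : ZMod n) : DihedralGroup.sr k • a = -a - k := rfl

theorem two_ne_zero_of_three_le (hn : 3 ≤ n) : (2 : ZMod n) ≠ 0 := by
  rw [← Nat.cast_ofNat, Ne, ZMod.natCast_eq_zero_iff]
  exact Nat.not_dvd_of_pos_of_lt two_pos hn

theorem faithfulSMul_dihedralGroup (hn : 3 ≤ n) : FaithfulSMul (DihedralGroup n) (ZMod n) where
  eq_of_smul_eq_smul {g g'} h := by
    have h0 := h 0
    have h1 := h 1
    rcases g with k | k <;> rcases g' with l | l <;> simp only [r_smul, sr_smul] at h0 h1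
    · simpa using h0
    · exact absurd (by linear_combination h1 - h0) (two_ne_zero_of_three_le hn)
    · exact absurd (by linear_combination h0 - h1) (two_ne_zero_of_three_le hn)
    · simpa using h0

theorem isPairing_r_smul_iff (hn : 1 < n) (k : ZMod n) :
    IsPairing (DihedralGroup.r k • · : ZMod n → ZMod n) ↔ k ≠ 0 ∧ k + k = 0 := by
  have : Fact (1 < n) := ⟨hn⟩
  have hinv : Function.Involutive (DihedralGroup.r k • · : ZMod n → ZMod n) ↔ k + k = 0 := by
    simp [Function.Involutive, r_smul, add_assoc]
  rw [IsPairing, hinv, and_comm]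
  refine and_congr_left fun _ => ?_
  rcases eq_or_ne k 0 with rfl | hk
  · simpa [Function.fixedPoints, Function.IsFixedPt] using Set.not_subsingleton_iff.2
      Set.nontrivial_univ
  · simp [Function.fixedPoints, Function.IsFixedPt, r_smul, hk]

theorem involutive_sr_smul (k : ZMod n) :
    Function.Involutive (DihedralGroup.sr k • · : ZMod n → ZMod n) := fun a => by
  simp [sr_smul]

theorem isPairing_sr_smul_of_odd (hn : Odd n) (k : ZMod n) :
    IsPairing (DihedralGroup.sr k • · : ZMod n → ZMod n) := by
  refine ⟨involutive_sr_smul k, fun a ha b hb => ?_⟩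
  simp only [Function.mem_fixedPoints, Function.IsFixedPt, sr_smul] at ha hb
  rw [← sub_eq_zero, ← ZMod.add_self_eq_zero_iff_eq_zero hn]
  linear_combination hb - ha

theorem ne_zero_and_add_self_eq_zero_iff_two_mul_val_eq [NeZero n] (k : ZMod n) :
    k ≠ 0 ∧ k + k = 0 ↔ 2 * k.val = n := by
  rw [← neg_eq_iff_add_eq_zero, ZMod.neg_eq_self_iff]
  refine ⟨fun ⟨hk, h⟩ => h.resolve_left hk, fun h => ⟨?_, .inr h⟩⟩
  rintro rfl
  exact NeZero.ne n (by simpa using h.symm)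

theorem ne_zero_and_add_self_eq_zero_iff_of_even [NeZero n] (hn : Even n) (k : ZMod n) :
    k ≠ 0 ∧ k + k = 0 ↔ k = ((n / 2 : ℕ) : ZMod n) := by
  have hpos := NeZero.pos n
  have htwo := Nat.two_mul_div_two_of_even hn
  rw [ne_zero_and_add_self_eq_zero_iff_two_mul_val_eq, ← (ZMod.val_injective n).eq_iff,
    ZMod.val_natCast_of_lt (by omega)]
  omega

theorem isPairing_sr_smul_iff_of_even [NeZero n] (hn : Even n) (k : ZMod n) :
    IsPairing (DihedralGroup.sr k • · : ZMod n → ZMod n) ↔ ¬ Even k := by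
  obtain ⟨hm, hmm⟩ := (ne_zero_and_add_self_eq_zero_iff_of_even hn _).2 rfl
  set m : ZMod n := ((n / 2 : ℕ) : ZMod n)
  constructor
  · rintro ⟨-, hsub⟩ ⟨a, rfl⟩
    have ha : DihedralGroup.sr (a + a) • -a = -a := by rw [sr_smul]; ring
    have ham : DihedralGroup.sr (a + a) • (-a + m) = -a + m := by
      rw [sr_smul]; linear_combination -hmm
    exact hm (by simpa using hsub ham ha)
  · refine fun hk => ⟨involutive_sr_smul k, fun a ha => absurd ⟨-a, ?_⟩ hk⟩
    have ha' : -a - k = a := ha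
    linear_combination -ha'

theorem even_iff_even_val [NeZero n] (hn : Even n) (k : ZMod n) : Even k ↔ Even k.val := by
  constructor
  · rintro ⟨a, rfl⟩
    rw [ZMod.val_add, Nat.even_iff, Nat.mod_mod_of_dvd _ hn.two_dvd]
    omega
  · rintro ⟨c, hc⟩
    exact ⟨c, by rw [← Nat.cast_add, ← hc, ZMod.natCast_zmod_val]⟩

theorem even_add_one_iff_not_even [NeZero n] (hn : Even n) (k : ZMod n) :
    Even (k + 1) ↔ ¬ Even k := by
  have hval : (k + 1).val = (k.val + 1) % n := by
    rw [← ZMod.val_natCast, Nat.cast_add, ZMod.natCast_zmod_val, Nat.cast_one]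
  rw [even_iff_even_val hn, even_iff_even_val hn, hval, Nat.even_iff,
    Nat.mod_mod_of_dvd _ hn.two_dvd, ← Nat.even_iff, Nat.even_add_one]

theorem nat_card_not_even [NeZero n] (hn : Even n) : Nat.card {k : ZMod n // ¬ Even k} = n / 2 := by
  classical
  have hshift : Nat.card {k : ZMod n // ¬ Even k} = Nat.card {k : ZMod n // Even k} :=
    Nat.card_congr (Equiv.subtypeEquiv (Equiv.addRight 1) fun k =>
      (even_add_one_iff_not_even hn k).symm)
  have hcompl := Fintype.card_subtype_compl fun k : ZMod n => Even k
  have hle := Fintype.card_subtype_le fun k : ZMod n => Even k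
  simp only [Nat.card_eq_fintype_card, ZMod.card] at *
  omega

theorem nat_card_ne_zero_and_add_self_eq_zero [NeZero n] :
    Nat.card {k : ZMod n // k ≠ 0 ∧ k + k = 0} = if Even n then 1 else 0 := by
  split_ifs with hn
  · simp [ne_zero_and_add_self_eq_zero_iff_of_even hn]
  · refine Nat.card_eq_zero.2 (.inl ⟨fun k => hn ?_⟩)
    exact (ne_zero_and_add_self_eq_zero_iff_two_mul_val_eq k.1).1 k.2 ▸ even_two_mul _

theorem nat_card_isPairing_sr_smul [NeZero n] :
    Nat.card {k : ZMod n // IsPairing (DihedralGroup.sr k • · : ZMod n → ZMod n)} =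
      if Even n then n / 2 else n := by
  split_ifs with hn
  · simp only [isPairing_sr_smul_iff_of_even hn, nat_card_not_even hn]
  · simp [isPairing_sr_smul_of_odd (Nat.not_even_iff_odd.1 hn)]

theorem nat_card_isPairing_dihedralGroup [NeZero n] (hn : 1 < n) :
    Nat.card {g : DihedralGroup n // IsPairing (g • · : ZMod n → ZMod n)} =
      if Even n then n / 2 + 1 else n := by
  rw [← Nat.card_congr (DihedralGroup.equivSum.symm.subtypeEquivOfSubtype),
    Nat.card_congr Equiv.subtypeSum, Nat.card_sum]
  simp only [DihedralGroup.equivSum_symm_apply, isPairing_r_smul_iff hn,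
    nat_card_ne_zero_and_add_self_eq_zero, nat_card_isPairing_sr_smul]
  split_ifs <;> omega

end Dihedral

section Similarity

variable {n : ℕ}

/-- Two strings are similar when their paths agree up to rotation and reflection of the circle, a
path having two strings, which are reversals of one another. -/
def IsSimilar (x y : {x : Fin n → ZMod n // Function.Bijective x}) : Prop :=
  ∃ (k ε : ZMod n) (b : Bool), (ε = 1 ∨ ε = -1) ∧
    ∀ i : Fin n, y.1 i = ε * x.1 (if b then i.rev else i) + k

theorem exists_dihedralGroup_smul_iff {ι : Type*} {f f' : ι → ZMod n} :
    (∃ g : DihedralGroup n, ∀ i, f' i = g • f i) ↔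
      ∃ k ε : ZMod n, (ε = 1 ∨ ε = -1) ∧ ∀ i, f' i = ε * f i + k := by
  constructor
  · rintro ⟨k | k, h⟩
    · exact ⟨k, 1, .inl rfl, fun i => by rw [h, r_smul, one_mul]⟩
    · exact ⟨-k, -1, .inr rfl, fun i => by rw [h, sr_smul]; ring⟩
  · rintro ⟨k, ε, rfl | rfl, h⟩
    · exact ⟨.r k, fun i => by rw [h, r_smul, one_mul]⟩
    · exact ⟨.sr (-k), fun i => by rw [h, sr_smul]; ring⟩

theorem exists_zpowers_revPerm_iff {p : (Fin n → Fin n) → Prop} :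
    (∃ h : Subgroup.zpowers (Fin.revPerm (n := n)), p (h⁻¹ • ·)) ↔
      ∃ b : Bool, p fun i => if b then i.rev else i := by
  have hmem := mem_zpowers_iff_of_involutive (σ := Fin.revPerm (n := n)) Fin.rev_involutive
  constructor
  · rintro ⟨⟨h, hh⟩, hp⟩
    rcases (hmem h).1 hh with rfl | rfl
    · exact ⟨false, hp⟩
    · exact ⟨true, hp⟩
  · rintro ⟨_ | _, hp⟩
    · exact ⟨⟨1, one_mem _⟩, hp⟩
    · exact ⟨⟨Fin.revPerm, Subgroup.mem_zpowers _⟩, hp⟩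

theorem isSimilar_iff_mem_orbit {x y : {x : Fin n → ZMod n // Function.Bijective x}} :
    IsSimilar x y ↔ Equiv.bijectiveEquiv y ∈ MulAction.orbit
      (DihedralGroup n × Subgroup.zpowers (Fin.revPerm (n := n))) (Equiv.bijectiveEquiv x) := by
  have horbit : Equiv.bijectiveEquiv y ∈ MulAction.orbit
      (DihedralGroup n × Subgroup.zpowers (Fin.revPerm (n := n))) (Equiv.bijectiveEquiv x) ↔
      ∃ h : Subgroup.zpowers (Fin.revPerm (n := n)), ∃ g : DihedralGroup n,
        ∀ i, y.1 i = g • x.1 (h⁻¹ • i) := by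
    rw [MulAction.mem_orbit_iff, Prod.exists, exists_comm]
    simp only [Equiv.ext_iff, prod_smul_equiv_apply, Equiv.bijectiveEquiv_apply,
      Equiv.ofBijective_apply, eq_comm]
  rw [horbit]
  simp only [exists_dihedralGroup_smul_iff (f' := y.1)]
  rw [exists_zpowers_revPerm_iff (p := fun ρ => ∃ k ε : ZMod n, (ε = 1 ∨ ε = -1) ∧
    ∀ i, y.1 i = ε * x.1 (ρ i) + k)]
  exact ⟨fun ⟨k, ε, b, h⟩ => ⟨b, k, ε, h⟩, fun ⟨b, k, ε, h⟩ => ⟨k, ε, b, h⟩⟩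

theorem nat_card_quot_isSimilar :
    Nat.card (Quot (IsSimilar (n := n))) = Nat.card (MulAction.orbitRel.Quotient
      (DihedralGroup n × Subgroup.zpowers (Fin.revPerm (n := n))) (Fin n ≃ ZMod n)) := by
  refine Nat.card_congr (Quot.congr Equiv.bijectiveEquiv fun x y => ?_)
  rw [isSimilar_iff_mem_orbit, MulAction.orbitRel_apply, MulAction.mem_orbit_symm]

theorem two_pow_mul_factorial_of_even (hn : Even n) (hn0 : n ≠ 0) :
    2 ^ (n / 2) * (n / 2)! = n * (n - 2)‼ := by
  rw [← Nat.doubleFactorial_two_mul, Nat.two_mul_div_two_of_even hn,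
    ← Nat.succ_pred_eq_of_ne_zero hn0]
  exact Nat.doubleFactorial_add_one _

theorem two_pow_mul_factorial_of_odd (hn : Odd n) : 2 ^ (n / 2) * (n / 2)! = (n - 1)‼ := by
  rw [← Nat.doubleFactorial_two_mul, ← Nat.two_mul_odd_div_two (Nat.odd_iff.1 hn)]

theorem revPerm_ne_one (hn : 2 ≤ n) : (Fin.revPerm : Equiv.Perm (Fin n)) ≠ 1 := by
  intro h
  have h0 : Fin.rev (⟨0, by omega⟩ : Fin n) = ⟨0, by omega⟩ := Equiv.congr_fun h _
  simp only [Fin.ext_iff, Fin.val_rev] at h0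
  omega

theorem nat_card_quot_isSimilar_mul (hn : 3 ≤ n) :
    Nat.card (Quot (IsSimilar (n := n))) * (4 * n) =
      n ! + (if Even n then n / 2 + 1 else n) * (2 ^ (n / 2) * (n / 2)!) := by
  have : NeZero n := ⟨by omega⟩
  have := faithfulSMul_dihedralGroup hn
  have hcount := nat_card_orbits_mul_eq_of_isPairing (G := DihedralGroup n)
    (ZMod.finEquiv n).toEquiv (σ := Fin.revPerm) (isPairing_rev n) (revPerm_ne_one (by omega))
  rw [nat_card_isPairing_dihedralGroup (by omega), DihedralGroup.card, Fintype.card_fin,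
    ← nat_card_quot_isSimilar] at hcount
  rw [← hcount]
  ring

theorem four_mul_nat_card_quot_isSimilar (hn : 3 ≤ n) :
    4 * Nat.card (Quot (IsSimilar (n := n))) =
      (n - 1)! + if Even n then (n / 2 + 1) * (n - 2)‼ else (n - 1)‼ := by
  have hn0 : n ≠ 0 := by omega
  have hcount := nat_card_quot_isSimilar_mul hn
  rw [← Nat.mul_factorial_pred hn0] at hcount
  refine Nat.eq_of_mul_eq_mul_left (Nat.pos_of_ne_zero hn0) ?_
  split_ifs at hcount ⊢ with heven
  · rw [two_pow_mul_factorial_of_even heven hn0] at hcount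
    linear_combination hcount
  · rw [two_pow_mul_factorial_of_odd (Nat.not_even_iff_odd.1 heven)] at hcount
    linear_combination hcount

end Similarity

/-- Theorem 1 (paths up to rotation and reflection): the number of equivalence
classes of bijections `x : Fin n → ZMod n` (strings encoding Hamiltonian-path
subgraphs of `K_n`) under the relation identifying `x` and `y` when
`y i = ε * x (ρ_b i) + k` for some rotation `k`, sign `ε = ±1`, and optional
reversal `ρ_b`, equals `(1/4) * ((n-1)! + (if n even then (n/2+1)(n-2)!! else (n-1)!!))`. -/
theorem paths_similarity_classes (n : ℕ) (hn : 3 ≤ n) :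
    (Nat.card (Quot (fun x y : {x : Fin n → ZMod n // Function.Bijective x} =>
        ∃ (k ε : ZMod n) (b : Bool), (ε = 1 ∨ ε = -1) ∧
          ∀ i : Fin n, y.1 i = ε * x.1 (if b then i.rev else i) + k)) : ℚ) =
      (1 / 4) * (((n - 1)! : ℚ) +
        if Even n then ((n / 2 + 1) * Nat.doubleFactorial (n - 2) : ℕ)
        else (Nat.doubleFactorial (n - 1) : ℕ)) := by
  have hcount : (4 : ℚ) * Nat.card (Quot (IsSimilar (n := n))) =
      (n - 1)! + if Even n then ((n / 2 + 1) * (n - 2)‼ : ℕ) else ((n - 1)‼ : ℕ) := by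
    exact_mod_cast four_mul_nat_card_quot_isSimilar hn
  rw [← hcount, one_div, inv_mul_cancel_left₀ four_ne_zero]
  rfl
end

section
/- Let n ≥ 3 be an integer. Define an equivalence relation ≡_E on the set X_n of bijections x : Fin n → ZMod n by declaring x ≡_E y if and only if there exist k : ZMod n and a Boolean b such that for all i : Fin n, y i = x (ρ_b i) + k, where ρ_b is the identity on Fin n if b is false and the reversal i ↦ n - 1 - i if b is true. Then the number of equivalence classes of X_n under ≡_E equals (1/2) * ((n-1)! + (if n is even then (n-2)!! else 0)). -/
open Nat

/-!
Rotations of the circle and reversal of strings generate an action of `ℤ/n × {±1}` on strings, and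
the classes are its orbits, so Burnside's lemma counts them. A nontrivial rotation fixes no string.
A reversal followed by the rotation by `k` fixes `x` exactly when `x` carries the reversal of
`Fin n` to the translation by `k`. This forces `k` to have order two, hence `n` to be even; both
permutations are then fixed-point-free involutions, so such `x` form a coset of the centralizer of
one of them, which has `n‼` elements.
-/

open Equiv Function MulAction

section Involutions

lemma sum_cycleType_of_forall_ne {α : Type*} [Fintype α] [DecidableEq α] {σ : Perm α}
    (hfix : ∀ i, σ i ≠ i) : σ.cycleType.sum = Fintype.card α := by
  have hsupp : σ.support = Finset.univ := by ext i; simp [hfix i]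
  rw [σ.sum_cycleType, hsupp, Finset.card_univ]

lemma cycleType_of_involutive {α : Type*} [Fintype α] [DecidableEq α] {σ : Perm α}
    (hσ : Involutive σ) (hfix : ∀ i, σ i ≠ i) :
    σ.cycleType = Multiset.replicate (Fintype.card α / 2) 2 := by
  have hpow : σ ^ 2 = 1 := Perm.ext hσ
  have hrep := Perm.cycleType_of_pow_prime_eq_one hpow
  have hsum := sum_cycleType_of_forall_ne hfix
  rw [hrep, Multiset.sum_replicate, smul_eq_mul] at hsum
  rw [hrep, ← hsum, Nat.mul_div_cancel _ two_pos]

variable {α β : Type*}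

lemma card_semiconj_eq_card_centralizer {σ : Perm α} {τ : Perm β} {c : α ≃ β}
    (hc : Semiconj c σ τ) :
    Nat.card {x : α ≃ β // Semiconj x σ τ} = Nat.card (Subgroup.centralizer {σ}) := by
  refine Nat.card_congr (((Equiv.refl α).equivCongr c.symm).subtypeEquiv fun x ↦ ?_)
  rw [Subgroup.mem_centralizer_singleton_iff, Perm.ext_iff]
  refine forall_congr' fun i ↦ ?_
  have hcancel : c (σ (c.symm (x i))) = τ (x i) := by rw [hc, c.apply_symm_apply]
  simp [Equiv.symm_apply_eq, hcancel]

variable [Fintype α] [Fintype β]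

lemma card_centralizer_of_involutive {σ : Perm α} (hσ : Involutive σ) (hfix : ∀ i, σ i ≠ i) :
    Nat.card (Subgroup.centralizer {σ}) = (Fintype.card α)‼ := by
  classical
  have hcard : 2 * (Fintype.card α / 2) = Fintype.card α := by
    simpa [cycleType_of_involutive hσ hfix, mul_comm] using sum_cycleType_of_forall_ne hfix
  rw [Perm.nat_card_centralizer, sum_cycleType_of_forall_ne hfix, cycleType_of_involutive hσ hfix,
    ← hcard, Nat.doubleFactorial_two_mul]
  rcases eq_or_ne (Fintype.card α / 2) 0 with hzero | hpos
  · simp [hzero]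
  · simp [Multiset.toFinset_replicate, hpos]

lemma exists_semiconj_of_involutive {σ : Perm α} {τ : Perm β}
    (hσ : Involutive σ) (hσfix : ∀ i, σ i ≠ i) (hτ : Involutive τ) (hτfix : ∀ j, τ j ≠ j)
    (hcard : Fintype.card α = Fintype.card β) :
    ∃ c : α ≃ β, Semiconj c σ τ := by
  classical
  let e : α ≃ β := Fintype.equivOfCardEq hcard
  have hconj : IsConj σ (e.symm.permCongr τ) := by
    rw [Perm.isConj_iff_cycleType_eq, cycleType_of_involutive hσ hσfix, cycleType_of_involutive]
    · intro i
      simp [hτ _]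
    · intro i
      simpa [Equiv.symm_apply_eq] using hτfix (e i)
  obtain ⟨c, hc⟩ := isConj_iff.1 hconj
  refine ⟨c.trans e, fun i ↦ ?_⟩
  simpa [Equiv.eq_symm_apply] using DFunLike.congr_fun hc (c i)

lemma card_semiconj_of_involutive {σ : Perm α} {τ : Perm β}
    (hσ : Involutive σ) (hσfix : ∀ i, σ i ≠ i) (hτ : Involutive τ) (hτfix : ∀ j, τ j ≠ j)
    (hcard : Fintype.card α = Fintype.card β) :
    Nat.card {x : α ≃ β // Semiconj x σ τ} = (Fintype.card α)‼ := by
  obtain ⟨c, hc⟩ := exists_semiconj_of_involutive hσ hσfix hτ hτfix hcard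
  rw [card_semiconj_eq_card_centralizer hc, card_centralizer_of_involutive hσ hσfix]

end Involutions

section Translations

variable {G : Type*} [AddGroup G] {k : G}

lemma involutive_addRight_of_addOrderOf_eq_two (hk : addOrderOf k = 2) :
    Involutive (Equiv.addRight k) := fun a ↦ by
  have hkk : k + k = 0 := by rw [← two_nsmul, ← hk, addOrderOf_nsmul_eq_zero]
  simp [add_assoc, hkk]

lemma addRight_ne_self_of_addOrderOf_eq_two (hk : addOrderOf k = 2) (a : G) :
    Equiv.addRight k a ≠ a := by
  have hk0 : k ≠ 0 := (addOrderOf_eq_prime_iff.1 hk).2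
  simpa using hk0

lemma addOrderOf_eq_two_of_semiconj {α : Type*} {ρ : α → α} (hρ : Involutive ρ) {i : α}
    (hi : ρ i ≠ i) {x : α → G} (hx : Injective x) (h : Semiconj x ρ (Equiv.addRight k)) :
    addOrderOf k = 2 := by
  have hk : ∀ j, x (ρ j) = x j + k := h
  have hdouble : x i = x i + 2 • k :=
    calc x i = x (ρ (ρ i)) := by rw [hρ i]
      _ = x i + 2 • k := by rw [hk, hk, add_assoc, two_nsmul]
  have hk0 : k ≠ 0 := fun hk0 ↦ hi <| hx <| by rw [hk, hk0, add_zero]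
  exact addOrderOf_eq_prime (left_eq_add.1 hdouble) hk0

end Translations

section Reversal

variable {n : ℕ}

lemma rev_ne_self_of_even (hn : Even n) (i : Fin n) : i.rev ≠ i := by
  rw [Ne, Fin.ext_iff, Fin.val_rev]
  obtain ⟨m, rfl⟩ := hn
  omega

lemma card_semiconj_rev_addRight (hn : 2 ≤ n) (k : ZMod n) :
    Nat.card {x : Fin n ≃ ZMod n // Semiconj x Fin.revPerm (Equiv.addRight k)} =
      if addOrderOf k = 2 then n‼ else 0 := by
  have : NeZero n := ⟨by omega⟩
  split_ifs with hk
  · have heven : Even n := by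
      simpa only [even_iff_two_dvd, hk, ZMod.card] using addOrderOf_dvd_card (x := k)
    rw [card_semiconj_of_involutive Fin.rev_involutive (rev_ne_self_of_even heven)
      (involutive_addRight_of_addOrderOf_eq_two hk) (addRight_ne_self_of_addOrderOf_eq_two hk)
      (by rw [Fintype.card_fin, ZMod.card]), Fintype.card_fin]
  · have hzero : (0 : Fin n).rev ≠ 0 := by
      rw [Ne, Fin.ext_iff, Fin.val_rev, Fin.val_zero]
      omega
    have : IsEmpty {x : Fin n ≃ ZMod n // Semiconj x Fin.revPerm (Equiv.addRight k)} :=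
      ⟨fun x ↦ hk (addOrderOf_eq_two_of_semiconj Fin.rev_involutive hzero x.1.injective x.2)⟩
    exact Nat.card_of_isEmpty

end Reversal

section Action

/-- The action of `{±1}` on positions in which `-1` reverses the string: the maps `ρ_b`. -/
def reversal (n : ℕ) : ℤˣ →* Perm (Fin n) where
  toFun e := if e = 1 then 1 else Fin.revPerm
  map_one' := if_pos rfl
  map_mul' e f := by
    rcases Int.units_eq_one_or e with rfl | rfl <;> rcases Int.units_eq_one_or f with rfl | rfl <;>
      ext <;> simp

/-- The group generated by the rotations of the circle (the first factor) and the reversal of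
strings (the second). -/
abbrev StringSymmetry (n : ℕ) : Type := Multiplicative (ZMod n) × ℤˣ

/-- Rotations translate the labels of a string, and the sign permutes its positions. -/
instance stringAction (n : ℕ) : MulAction (StringSymmetry n) (Fin n ≃ ZMod n) where
  smul g x := ((reversal n g.2).trans x).trans (Equiv.addRight g.1.toAdd)
  one_smul x := by
    ext i
    change x (reversal n 1 i) + 0 = x i
    rw [map_one, Perm.one_apply, add_zero]
  mul_smul g h x := by
    ext i
    change x (reversal n (g.2 * h.2) i) + (g.1.toAdd + h.1.toAdd) =
      x (reversal n h.2 (reversal n g.2 i)) + h.1.toAdd + g.1.toAdd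
    rw [mul_comm g.2, map_mul, Perm.mul_apply, add_comm g.1.toAdd, add_assoc]

variable {n : ℕ}

lemma rotation_smul_apply (k : Multiplicative (ZMod n)) (x : Fin n ≃ ZMod n) (i : Fin n) :
    (((k, 1) : StringSymmetry n) • x) i = x i + k.toAdd := rfl

lemma reversal_smul_apply (k : Multiplicative (ZMod n)) (x : Fin n ≃ ZMod n) (i : Fin n) :
    (((k, -1) : StringSymmetry n) • x) i = x i.rev + k.toAdd := rfl

/-- The relation `≡_E` on strings: `x` and `y` agree up to rotation, where `b` records whether the
path is traversed backwards. -/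
def SamePath (x y : {x : Fin n → ZMod n // Bijective x}) : Prop :=
  ∃ (k : ZMod n) (b : Bool), ∀ i : Fin n, y.1 i = x.1 (if b then i.rev else i) + k

lemma samePath_iff_mem_orbit (x y : {x : Fin n → ZMod n // Bijective x}) :
    SamePath x y ↔ bijectiveEquiv y ∈ orbit (StringSymmetry n) (bijectiveEquiv x) := by
  constructor
  · rintro ⟨k, _ | _, h⟩
    · exact ⟨(.ofAdd k, 1), Equiv.ext fun i ↦ (rotation_smul_apply _ _ i).trans (h i).symm⟩
    · exact ⟨(.ofAdd k, -1), Equiv.ext fun i ↦ (reversal_smul_apply _ _ i).trans (h i).symm⟩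
  · rintro ⟨⟨k, e⟩, h⟩
    have hy : ∀ i, y.1 i = _ := fun i ↦ (DFunLike.congr_fun h i).symm
    rcases Int.units_eq_one_or e with rfl | rfl
    · exact ⟨k.toAdd, false, hy⟩
    · exact ⟨k.toAdd, true, hy⟩

lemma card_quot_samePath :
    Nat.card (Quot (SamePath (n := n))) =
      Nat.card (orbitRel.Quotient (StringSymmetry n) (Fin n ≃ ZMod n)) := by
  refine Nat.card_congr (Quot.congr bijectiveEquiv fun x y ↦ ?_)
  rw [samePath_iff_mem_orbit, Setoid.comm', orbitRel_apply]

end Action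

section Burnside

variable {n : ℕ}

lemma card_fixedBy_rotation [NeZero n] (k : Multiplicative (ZMod n)) :
    Nat.card (fixedBy (Fin n ≃ ZMod n) ((k, 1) : StringSymmetry n)) = if k = 1 then n ! else 0 := by
  split_ifs with hk
  · rw [hk, ← Prod.one_eq_mk, fixedBy_one_eq_univ, Nat.card_coe_set_eq, Set.ncard_univ,
      Nat.card_eq_fintype_card, Fintype.card_equiv (ZMod.finEquiv n).toEquiv, Fintype.card_fin]
  · have : IsEmpty (fixedBy (Fin n ≃ ZMod n) ((k, 1) : StringSymmetry n)) := by
      refine ⟨fun x ↦ hk ?_⟩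
      simpa [rotation_smul_apply] using DFunLike.congr_fun x.2 0
    exact Nat.card_of_isEmpty

lemma mem_fixedBy_reversal_iff (k : Multiplicative (ZMod n)) (x : Fin n ≃ ZMod n) :
    x ∈ fixedBy (Fin n ≃ ZMod n) ((k, -1) : StringSymmetry n) ↔
      Semiconj x Fin.revPerm (Equiv.addRight k.toAdd) := by
  rw [mem_fixedBy, Equiv.ext_iff, Fin.rev_surjective.forall]
  refine forall_congr' fun i ↦ ?_
  rw [reversal_smul_apply, Fin.rev_rev, eq_comm]
  rfl

lemma card_fixedBy_reversal (hn : 2 ≤ n) (k : Multiplicative (ZMod n)) :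
    Nat.card (fixedBy (Fin n ≃ ZMod n) ((k, -1) : StringSymmetry n)) =
      if orderOf k = 2 then n‼ else 0 := by
  rw [Nat.card_congr (Equiv.subtypeEquivRight (mem_fixedBy_reversal_iff k)),
    card_semiconj_rev_addRight hn, ← orderOf_ofAdd_eq_addOrderOf,
    ofAdd_toAdd]

lemma card_filter_orderOf_eq_two {G : Type*} [Group G] [IsCyclic G] [Fintype G] :
    Finset.card {g : G | orderOf g = 2} = if Even (Fintype.card G) then 1 else 0 := by
  split_ifs with heven
  · rw [IsCyclic.card_orderOf_eq_totient (even_iff_two_dvd.1 heven), Nat.totient_two]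
  · rw [Finset.card_eq_zero, Finset.filter_eq_empty_iff]
    exact fun g _ hg ↦ heven (even_iff_two_dvd.2 (hg ▸ orderOf_dvd_card))

theorem card_quot_samePath_mul (hn : 2 ≤ n) :
    Nat.card (Quot (SamePath (n := n))) * (n * 2) = n ! + if Even n then n‼ else 0 := by
  classical
  have : NeZero n := ⟨by omega⟩
  have hgroup : Nat.card (StringSymmetry n) = n * 2 := by simp
  calc Nat.card (Quot (SamePath (n := n))) * (n * 2)
      = ∑ g : StringSymmetry n, Nat.card (fixedBy (Fin n ≃ ZMod n) g) := by
        have burnside := sum_card_fixedBy_eq_card_orbits_mul_card_group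
          (StringSymmetry n) (Fin n ≃ ZMod n)
        simp only [Fintype.card_eq_nat_card] at burnside
        rw [burnside, card_quot_samePath, hgroup]
    _ = ∑ k : Multiplicative (ZMod n),
          ((if k = 1 then n ! else 0) + if orderOf k = 2 then n‼ else 0) := by
        have hsigns : (1 : ℤˣ) ≠ -1 := by decide
        simp only [Fintype.sum_prod_type, UnitsInt.univ, Finset.sum_pair hsigns,
          card_fixedBy_rotation, card_fixedBy_reversal hn]
    _ = n ! + if Even n then n‼ else 0 := by
        rw [Finset.sum_add_distrib, Fintype.sum_ite_eq', ← Finset.sum_filter, Finset.sum_const,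
          card_filter_orderOf_eq_two, Fintype.card_multiplicative, ZMod.card, ite_smul, one_smul,
          zero_smul]

end Burnside

/-- Theorem 2 (paths up to rotation only): the number of equivalence classes of
bijections `x : Fin n → ZMod n` under the relation identifying `x` and `y` when
`y i = x (ρ_b i) + k` for some rotation `k` and optional reversal `ρ_b`, equals
`(1/2) * ((n-1)! + (if n even then (n-2)!! else 0))`. -/
theorem paths_equivalence_classes (n : ℕ) (hn : 3 ≤ n) :
    (Nat.card (Quot (fun x y : {x : Fin n → ZMod n // Function.Bijective x} =>
        ∃ (k : ZMod n) (b : Bool),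
          ∀ i : Fin n, y.1 i = x.1 (if b then i.rev else i) + k)) : ℚ) =
      (1 / 2) * (((n - 1)! : ℚ) +
        if Even n then (Nat.doubleFactorial (n - 2) : ℕ) else 0) := by
  change (Nat.card (Quot (SamePath (n := n))) : ℚ) = _
  have hcount := card_quot_samePath_mul (n := n) (by omega)
  obtain ⟨m, rfl⟩ : ∃ m, n = m + 2 := ⟨n - 2, by omega⟩
  rw [Nat.factorial_succ, Nat.doubleFactorial_add_two, ← mul_ite_zero, ← mul_add,
    mul_left_comm] at hcount
  have hdiv := Nat.eq_of_mul_eq_mul_left (by omega) hcount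
  have hcast := congrArg (Nat.cast : ℕ → ℚ) hdiv
  push_cast at hcast
  simp only [Nat.add_sub_cancel]
  push_cast
  linarith
end

section
/- Let n ≥ 3 be an integer. Define an equivalence relation ≈_S on the set Y_n of bijections x : ZMod n → ZMod n by declaring x ≈_S y if and only if there exist m, k : ZMod n and signs δ, ε ∈ {1, -1} ⊆ ZMod n such that for all i : ZMod n, y i = ε * x (δ * i + m) + k. Then the number of equivalence classes of Y_n under ≈_S equals (1/(4n²)) * ( Σ_{d ∣ n} φ(n/d)² * (n/d)^d * d! + (if n is even then n!! * n * (n + 6) / 4 else n² * (n-1)!!) ), where φ is Euler's totient function. -/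
open Nat

/-! Two cyclic strings are similar exactly when, as permutations of `ZMod n`, they lie in the same
double coset of the dihedral group `D`. Burnside's lemma for `D × D` acting by two-sided translation
turns the number of double cosets into the sum over `g, h ∈ D` of the number of permutations
conjugating `g` to `h`, which is the order of the centralizer of `g` if `g` and `h` are conjugate
and `0` otherwise. All cycles of a rotation have the same length, so two rotations are conjugate
exactly when they have the same order: these pairs give the sum over the divisors of `n`.
Reflections are involutions, hence are classified by their number of fixed points, and `x ↦ a - x`
fixes the solutions of `2x = a`. For even `n` the half turn is a fixed-point-free involution as
well, and is therefore conjugate to half of the reflections. -/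

section Conjugators

variable {G H K : Type*} [Group G] [Group H] [Group K]

/-- The set of elements conjugating `a` to `b`, that is, the `x` with `x * a = b * x`. These are the
points fixed by `(b, a)` when pairs act on `G` by two-sided translation. -/
def conjugators (a b : G) : Set G := {x | SemiconjBy x a b}

theorem ncard_conjugators_of_isConj {a b : G} (h : IsConj a b) :
    (conjugators a b).ncard = Nat.card (Subgroup.centralizer {a}) := by
  obtain ⟨c, rfl⟩ := isConj_iff.1 h
  have conjugators_eq : conjugators a (c * a * c⁻¹) = (c * ·) '' Subgroup.centralizer {a} := by
    ext x
    rw [Set.image_mul_left, Set.mem_preimage, SetLike.mem_coe,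
      Subgroup.mem_centralizer_singleton_iff]
    change x * a = c * a * c⁻¹ * x ↔ c⁻¹ * x * a = a * (c⁻¹ * x)
    rw [mul_assoc c⁻¹, inv_mul_eq_iff_eq_mul]
    simp only [mul_assoc]
  rw [conjugators_eq, Set.ncard_image_of_injective _ (mul_right_injective c)]
  rfl

theorem ncard_conjugators_of_not_isConj {a b : G} (h : ¬IsConj a b) :
    (conjugators a b).ncard = 0 := by
  have : conjugators a b = ∅ :=
    Set.eq_empty_of_forall_notMem fun x hx => h ⟨toUnits x, hx⟩
  rw [this, Set.ncard_empty]

theorem ncard_conjugators_comm (a b : G) :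
    (conjugators a b).ncard = (conjugators b a).ncard := by
  have : conjugators a b = Inv.inv '' conjugators b a := by
    ext x
    rw [Set.image_inv_eq_inv, Set.mem_inv]
    exact SemiconjBy.inv_symm_left_iff.symm
  rw [this, Set.ncard_image_of_injective _ inv_injective]

/-- The action of `H × K` on `G` by two-sided translation, `(h, k) • x = ρ h * x * (σ k)⁻¹`, whose
orbits are the double cosets of the two ranges. -/
abbrev twoSidedAction (ρ : H →* G) (σ : K →* G) : MulAction (H × K) G where
  smul g x := ρ g.1 * x * (σ g.2)⁻¹
  one_smul x := by
    change ρ 1 * x * (σ 1)⁻¹ = x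
    simp only [map_one, one_mul, inv_one, mul_one]
  mul_smul g g' x := by
    change ρ (g.1 * g'.1) * x * (σ (g.2 * g'.2))⁻¹ = ρ g.1 * (ρ g'.1 * x * (σ g'.2)⁻¹) * (σ g.2)⁻¹
    simp only [map_mul, mul_inv_rev, mul_assoc]

theorem card_doubleCoset_quotient_mul_card [Finite G] [Fintype H] [Fintype K]
    (ρ : H →* G) (σ : K →* G) :
    Nat.card (DoubleCoset.Quotient (ρ.range : Set G) σ.range) * (Nat.card H * Nat.card K) =
      ∑ h, ∑ k, (conjugators (σ k) (ρ h)).ncard := by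
  classical
  have := Fintype.ofFinite G
  let := twoSidedAction ρ σ
  have orbitRel_iff (x y : G) :
      DoubleCoset.setoid (ρ.range : Set G) σ.range x y ↔ MulAction.orbitRel (H × K) G x y := by
    rw [DoubleCoset.rel_iff, Setoid.comm', MulAction.orbitRel_apply, MulAction.mem_orbit_iff]
    constructor
    · rintro ⟨_, ⟨h, rfl⟩, _, ⟨k, rfl⟩, rfl⟩
      refine ⟨(h, k⁻¹), ?_⟩
      change ρ h * x * (σ k⁻¹)⁻¹ = _
      rw [map_inv, inv_inv]
    · rintro ⟨⟨h, k⟩, rfl⟩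
      exact ⟨ρ h, ⟨h, rfl⟩, (σ k)⁻¹, ⟨k⁻¹, map_inv σ k⟩, rfl⟩
  have card_fixedBy (h : H) (k : K) :
      Fintype.card (MulAction.fixedBy G (h, k)) = (conjugators (σ k) (ρ h)).ncard := by
    rw [← Nat.card_eq_fintype_card, Nat.card_coe_set_eq]
    congr 1
    ext x
    exact mul_inv_eq_iff_eq_mul.trans eq_comm
  have burnside := MulAction.sum_card_fixedBy_eq_card_orbits_mul_card_group (H × K) G
  rw [Fintype.sum_prod_type] at burnside
  simp only [card_fixedBy] at burnside
  rw [burnside, ← Nat.card_eq_fintype_card, ← Nat.card_eq_fintype_card, Nat.card_prod]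
  congr 1
  exact Nat.card_congr (Quotient.congrRight orbitRel_iff)

end Conjugators

section CycleType

open Equiv.Perm

variable {α : Type*}

/-- A permutation is semiregular if each of its powers that fixes a point is trivial. Rotations have
this property, which forces all cycles to have the same length. -/
def IsSemiregular (σ : Equiv.Perm α) : Prop := ∀ (m : ℕ) (x : α), (σ ^ m) x = x → σ ^ m = 1

theorem IsSemiregular.cycleType_eq_replicate_card [Fintype α] [DecidableEq α] {σ : Equiv.Perm α}
    (h : IsSemiregular σ) : σ.cycleType = Multiset.replicate σ.cycleType.card (orderOf σ) := by
  refine Multiset.eq_replicate_card.2 fun m hm =>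
    Nat.dvd_antisymm (dvd_of_mem_cycleType hm) (orderOf_dvd_of_pow_eq_one ?_)
  obtain ⟨c, τ, rfl, hdisj, hc, rfl⟩ := mem_cycleType_iff.1 hm
  obtain ⟨x, hx, -⟩ := id hc
  refine h _ x ?_
  rw [hdisj.commute.mul_pow, ← hc.orderOf, pow_orderOf_eq_one, one_mul]
  exact pow_apply_eq_self_of_apply_eq_self ((hdisj x).resolve_left hx) _

theorem IsSemiregular.card_cycleType_mul_orderOf [Fintype α] [DecidableEq α] {σ : Equiv.Perm α}
    (h : IsSemiregular σ) (hσ : σ ≠ 1) : σ.cycleType.card * orderOf σ = Nat.card α := by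
  have support_eq : σ.support = Finset.univ :=
    Finset.eq_univ_of_forall fun x => mem_support.2 fun hx => hσ (pow_one σ ▸ h 1 x hx)
  rw [← smul_eq_mul, ← Multiset.sum_replicate, ← h.cycleType_eq_replicate_card, sum_cycleType,
    support_eq, Finset.card_univ, Nat.card_eq_fintype_card]

theorem IsSemiregular.cycleType_eq [Fintype α] [DecidableEq α] {σ : Equiv.Perm α}
    (h : IsSemiregular σ) (hσ : σ ≠ 1) :
    σ.cycleType = Multiset.replicate (Nat.card α / orderOf σ) (orderOf σ) := by
  rw [← h.card_cycleType_mul_orderOf hσ, Nat.mul_div_cancel _ (orderOf_pos σ)]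
  exact h.cycleType_eq_replicate_card

theorem IsSemiregular.isConj_iff_orderOf_eq [Finite α] {σ τ : Equiv.Perm α}
    (hσ : IsSemiregular σ) (hτ : IsSemiregular τ) : IsConj σ τ ↔ orderOf σ = orderOf τ := by
  classical
  have := Fintype.ofFinite α
  rw [isConj_iff_cycleType_eq]
  refine ⟨fun h => by rw [← lcm_cycleType, h, lcm_cycleType], fun h => ?_⟩
  by_cases hσ1 : σ = 1
  · have hτ1 : τ = 1 := orderOf_eq_one_iff.1 (by rw [← h, hσ1, orderOf_one])
    rw [hσ1, hτ1]
  · have hτ1 : τ ≠ 1 := fun hτ1 => hσ1 (orderOf_eq_one_iff.1 (by rw [h, hτ1, orderOf_one]))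
    rw [hσ.cycleType_eq hσ1, hτ.cycleType_eq hτ1, h]

theorem card_centralizer_of_cycleType_eq_replicate [Fintype α] [DecidableEq α] {σ : Equiv.Perm α}
    {d e : ℕ} (h : σ.cycleType = Multiset.replicate d e) :
    Nat.card (Subgroup.centralizer {σ}) = (Nat.card α - d * e)! * e ^ d * d ! := by
  rw [nat_card_centralizer, h, Nat.card_eq_fintype_card]
  rcases eq_or_ne d 0 with rfl | hd
  · simp
  · simp [Multiset.toFinset_replicate, hd]

theorem IsSemiregular.card_centralizer [Finite α] {σ : Equiv.Perm α} (h : IsSemiregular σ) :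
    Nat.card (Subgroup.centralizer {σ}) =
      orderOf σ ^ (Nat.card α / orderOf σ) * (Nat.card α / orderOf σ)! := by
  classical
  have := Fintype.ofFinite α
  rw [card_centralizer_of_cycleType_eq_replicate h.cycleType_eq_replicate_card]
  by_cases hσ : σ = 1
  · simp [hσ]
  · rw [← h.card_cycleType_mul_orderOf hσ, Nat.mul_div_cancel _ (orderOf_pos σ), Nat.sub_self,
      Nat.factorial_zero, one_mul]

theorem two_mul_card_cycleType_add_ncard_fixedPoints [Fintype α] [DecidableEq α]
    {σ : Equiv.Perm α} (h : σ ^ 2 = 1) :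
    2 * σ.cycleType.card + (Function.fixedPoints σ).ncard = Nat.card α := by
  have sum_eq : σ.cycleType.sum = 2 * σ.cycleType.card := by
    rw [cycleType_of_pow_prime_eq_one h, Multiset.sum_replicate, Multiset.card_replicate,
      smul_eq_mul, mul_comm]
  have ncard_eq : (Function.fixedPoints σ).ncard = Nat.card α - σ.cycleType.sum := by
    rw [← Nat.card_coe_set_eq, Nat.card_eq_fintype_card, card_fixedPoints,
      Nat.card_eq_fintype_card]
  have sum_le := σ.sum_cycleType_le
  rw [← Nat.card_eq_fintype_card] at sum_le
  omega

theorem isConj_iff_ncard_fixedPoints_eq_of_sq_eq_one [Finite α] {σ τ : Equiv.Perm α}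
    (hσ : σ ^ 2 = 1) (hτ : τ ^ 2 = 1) :
    IsConj σ τ ↔ (Function.fixedPoints σ).ncard = (Function.fixedPoints τ).ncard := by
  classical
  have := Fintype.ofFinite α
  have card_σ := two_mul_card_cycleType_add_ncard_fixedPoints hσ
  have card_τ := two_mul_card_cycleType_add_ncard_fixedPoints hτ
  rw [isConj_iff_cycleType_eq, cycleType_of_pow_prime_eq_one hσ, cycleType_of_pow_prime_eq_one hτ,
    (Multiset.replicate_left_injective 2).eq_iff]
  omega

theorem card_centralizer_of_sq_eq_one [Finite α] {σ : Equiv.Perm α} (h : σ ^ 2 = 1) :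
    Nat.card (Subgroup.centralizer {σ}) =
      (Function.fixedPoints σ).ncard ! * (Nat.card α - (Function.fixedPoints σ).ncard)‼ := by
  classical
  have := Fintype.ofFinite α
  rw [card_centralizer_of_cycleType_eq_replicate (cycleType_of_pow_prime_eq_one h),
    ← two_mul_card_cycleType_add_ncard_fixedPoints h, Nat.add_sub_cancel, mul_comm 2,
    Nat.add_sub_cancel_left, mul_comm _ 2, Nat.doubleFactorial_two_mul, mul_assoc]

end CycleType

section Counting

theorem sum_sum_ite_and {α β : Type*} [Fintype α] [Fintype β] (p : α → Prop) (q : β → Prop)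
    {_ : ∀ a b, Decidable (p a ∧ q b)} (c : ℕ) :
    ∑ a, ∑ b, (if p a ∧ q b then c else 0) = Nat.card {a // p a} * Nat.card {b // q b} * c := by
  classical
  have ite_eq (a : α) (b : β) :
      (if p a ∧ q b then c else 0) = (if p a then 1 else 0) * ((if q b then 1 else 0) * c) := by
    by_cases ha : p a <;> by_cases hb : q b <;> simp [ha, hb]
  simp only [ite_eq, ← Finset.mul_sum, ← Finset.sum_mul, Finset.sum_boole, Nat.cast_id,
    Nat.card_eq_fintype_card, Fintype.card_subtype, mul_assoc]

variable {A : Type*} [AddGroup A]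

theorem card_notMem_addSubgroup [Finite A] (S : AddSubgroup A) :
    Nat.card {a // a ∉ S} = Nat.card A - Nat.card S :=
  Set.ncard_compl (S : Set A)

theorem card_mem_addSubgroup_and_ne_zero (S : AddSubgroup A) :
    Nat.card {a // a ∈ S ∧ a ≠ 0} = Nat.card S - 1 :=
  Set.ncard_sdiff_singleton_of_mem S.zero_mem

end Counting

section Translations

variable {A : Type*} [AddGroup A]

theorem addRight_eq_one_iff {a : A} : Equiv.addRight a = 1 ↔ a = 0 :=
  ⟨fun h => by simpa using Equiv.congr_fun h 0, by rintro rfl; exact Equiv.addRight_zero⟩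

theorem isSemiregular_addRight (a : A) : IsSemiregular (Equiv.addRight a) := by
  intro m x hx
  rw [Equiv.nsmul_addRight] at hx ⊢
  exact addRight_eq_one_iff.2 (left_eq_add.1 hx.symm)

theorem orderOf_addRight (a : A) : orderOf (Equiv.addRight a) = addOrderOf a := by
  rw [← orderOf_ofAdd_eq_addOrderOf, orderOf_eq_orderOf_iff]
  intro m
  rw [Equiv.nsmul_addRight, addRight_eq_one_iff, ← ofAdd_nsmul, ofAdd_eq_one]

theorem isConj_addRight_iff [Finite A] {a b : A} :
    IsConj (Equiv.addRight a) (Equiv.addRight b) ↔ addOrderOf a = addOrderOf b := by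
  rw [(isSemiregular_addRight a).isConj_iff_orderOf_eq (isSemiregular_addRight b),
    orderOf_addRight, orderOf_addRight]

theorem ncard_conjugators_addRight_addRight [Finite A] (a b : A) :
    (conjugators (Equiv.addRight a) (Equiv.addRight b)).ncard =
      if addOrderOf a = addOrderOf b then
        addOrderOf a ^ (Nat.card A / addOrderOf a) * (Nat.card A / addOrderOf a)! else 0 := by
  split_ifs with h
  · rw [ncard_conjugators_of_isConj (isConj_addRight_iff.2 h),
      (isSemiregular_addRight a).card_centralizer, orderOf_addRight]
  · rw [ncard_conjugators_of_not_isConj (isConj_addRight_iff.not.2 h)]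

theorem sum_ncard_conjugators_addRight_addRight [IsAddCyclic A] [Fintype A] :
    ∑ a : A, ∑ b : A, (conjugators (Equiv.addRight a) (Equiv.addRight b)).ncard =
      ∑ d ∈ (Nat.card A).divisors, φ (Nat.card A / d) ^ 2 * (Nat.card A / d) ^ d * d ! := by
  classical
  set n := Nat.card A
  have hn : n ≠ 0 := Nat.card_pos.ne'
  have card_addOrderOf : ∀ e ∈ n.divisors, ({a : A | addOrderOf a = e} : Finset A).card = φ e :=
    fun e he => IsAddCyclic.card_addOrderOf_eq_totient
      (Nat.card_eq_fintype_card (α := A) ▸ Nat.dvd_of_mem_divisors he)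
  have addOrderOf_mem (a : A) : addOrderOf a ∈ n.divisors :=
    Nat.mem_divisors.2 ⟨addOrderOf_dvd_natCard a, hn⟩
  have inner_sum (a : A) :
      ∑ b : A, (conjugators (Equiv.addRight a) (Equiv.addRight b)).ncard =
        φ (addOrderOf a) * (addOrderOf a ^ (n / addOrderOf a) * (n / addOrderOf a)!) := by
    simp only [ncard_conjugators_addRight_addRight, eq_comm (a := addOrderOf a)]
    rw [← Finset.sum_filter, Finset.sum_const, smul_eq_mul, card_addOrderOf _ (addOrderOf_mem a)]
  calc ∑ a : A, ∑ b : A, (conjugators (Equiv.addRight a) (Equiv.addRight b)).ncard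
      = ∑ a : A, φ (addOrderOf a) * (addOrderOf a ^ (n / addOrderOf a) * (n / addOrderOf a)!) :=
        Finset.sum_congr rfl fun a _ => inner_sum a
    _ = ∑ e ∈ n.divisors, φ e * (φ e * (e ^ (n / e) * (n / e)!)) := by
        rw [← Finset.sum_fiberwise_of_maps_to' (fun a _ => addOrderOf_mem a)
          fun e => φ e * (e ^ (n / e) * (n / e)!)]
        refine Finset.sum_congr rfl fun e he => ?_
        rw [Finset.sum_const, smul_eq_mul, card_addOrderOf e he]
    _ = ∑ d ∈ n.divisors, φ (n / d) ^ 2 * (n / d) ^ d * d ! := by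
        rw [← Nat.sum_div_divisors n fun d => φ (n / d) ^ 2 * (n / d) ^ d * d !]
        refine Finset.sum_congr rfl fun e he => ?_
        rw [Nat.div_div_self (Nat.dvd_of_mem_divisors he) hn]
        ring

end Translations

section Reflections

variable {A : Type*} [AddCommGroup A]

variable (A) in
/-- The endomorphism `x ↦ 2 • x`: its fibres are the sets of fixed points of the reflections
`x ↦ a - x`. -/
abbrev doubling : A →+ A := nsmulAddMonoidHom 2

theorem subLeft_sq (a : A) : Equiv.subLeft a ^ 2 = (1 : Equiv.Perm A) := by
  ext x
  exact sub_sub_cancel a x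

theorem subLeft_ne_one (hA : ∃ x : A, 2 • x ≠ 0) (a : A) :
    Equiv.subLeft a ≠ (1 : Equiv.Perm A) := by
  intro h
  obtain ⟨x, hx⟩ := hA
  have sub_eq (y : A) : a - y = y := Equiv.congr_fun h y
  have ha : a = 0 := by simpa using sub_eq 0
  exact hx (by rw [two_nsmul, ← sub_eq_iff_eq_add.1 (sub_eq x), ha])

theorem ncard_fixedPoints_addRight_of_ne_zero {a : A} (ha : a ≠ 0) :
    (Function.fixedPoints (Equiv.addRight a)).ncard = 0 := by
  have : Function.fixedPoints (Equiv.addRight a) = ∅ :=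
    Set.eq_empty_of_forall_notMem fun x hx => ha (left_eq_add.1 (Eq.symm hx))
  rw [this, Set.ncard_empty]

theorem fixedPoints_subLeft (a : A) :
    Function.fixedPoints (Equiv.subLeft a) = (doubling A) ⁻¹' {a} := by
  ext x
  change a - x = x ↔ 2 • x = a
  rw [two_nsmul, sub_eq_iff_eq_add, eq_comm]

theorem ncard_fixedPoints_subLeft_of_mem {a : A} (ha : a ∈ (doubling A).range) :
    (Function.fixedPoints (Equiv.subLeft a)).ncard = Nat.card (doubling A).ker := by
  obtain ⟨x, rfl⟩ := ha
  rw [fixedPoints_subLeft, ← Nat.card_coe_set_eq]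
  exact Nat.card_congr (AddMonoidHom.fiberEquivKer _ x)

theorem ncard_fixedPoints_subLeft_of_notMem {a : A} (ha : a ∉ (doubling A).range) :
    (Function.fixedPoints (Equiv.subLeft a)).ncard = 0 := by
  rw [fixedPoints_subLeft, Set.preimage_singleton_eq_empty.2 ha, Set.ncard_empty]

section Finite

variable [Finite A]

theorem isConj_subLeft_addRight_iff (hA : ∃ x : A, 2 • x ≠ 0) {a b : A} :
    IsConj (Equiv.subLeft a) (Equiv.addRight b) ↔
      a ∉ (doubling A).range ∧ b ∈ (doubling A).ker ∧ b ≠ 0 := by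
  have sq_addRight : Equiv.addRight b ^ 2 = 1 ↔ b ∈ (doubling A).ker := by
    rw [Equiv.nsmul_addRight, addRight_eq_one_iff]
    rfl
  constructor
  · intro h
    have hb0 : b ≠ 0 := by
      rintro rfl
      rw [Equiv.addRight_zero, isConj_one_left] at h
      exact subLeft_ne_one hA a h
    have hb2 : Equiv.addRight b ^ 2 = 1 := isConj_one_right.1 (subLeft_sq a ▸ h.pow 2)
    refine ⟨fun ha => ?_, sq_addRight.1 hb2, hb0⟩
    have ker_card := (isConj_iff_ncard_fixedPoints_eq_of_sq_eq_one (subLeft_sq a) hb2).1 h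
    rw [ncard_fixedPoints_subLeft_of_mem ha, ncard_fixedPoints_addRight_of_ne_zero hb0] at ker_card
    exact Nat.card_pos.ne' ker_card
  · rintro ⟨ha, hb, hb0⟩
    rw [isConj_iff_ncard_fixedPoints_eq_of_sq_eq_one (subLeft_sq a) (sq_addRight.2 hb),
      ncard_fixedPoints_subLeft_of_notMem ha, ncard_fixedPoints_addRight_of_ne_zero hb0]

open Classical in
theorem ncard_conjugators_subLeft_addRight (hA : ∃ x : A, 2 • x ≠ 0) (a b : A) :
    (conjugators (Equiv.subLeft a) (Equiv.addRight b)).ncard =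
      if a ∉ (doubling A).range ∧ b ∈ (doubling A).ker ∧ b ≠ 0 then (Nat.card A)‼ else 0 := by
  rw [← if_congr (isConj_subLeft_addRight_iff hA) rfl rfl]
  split_ifs with h
  · rw [ncard_conjugators_of_isConj h, card_centralizer_of_sq_eq_one (subLeft_sq a),
      ncard_fixedPoints_subLeft_of_notMem ((isConj_subLeft_addRight_iff hA).1 h).1, Nat.sub_zero,
      Nat.factorial_zero, one_mul]
  · exact ncard_conjugators_of_not_isConj h

theorem isConj_subLeft_iff {a b : A} :
    IsConj (Equiv.subLeft a) (Equiv.subLeft b) ↔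
      (a ∈ (doubling A).range ↔ b ∈ (doubling A).range) := by
  have card_ker_ne_zero : Nat.card (doubling A).ker ≠ 0 := Nat.card_pos.ne'
  rw [isConj_iff_ncard_fixedPoints_eq_of_sq_eq_one (subLeft_sq a) (subLeft_sq b)]
  by_cases ha : a ∈ (doubling A).range <;> by_cases hb : b ∈ (doubling A).range <;>
    simp only [ha, hb, not_false_eq_true, ncard_fixedPoints_subLeft_of_mem,
      ncard_fixedPoints_subLeft_of_notMem, card_ker_ne_zero, card_ker_ne_zero.symm, true_iff,
      iff_true]

open Classical in
theorem ncard_conjugators_subLeft_subLeft (a b : A) :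
    (conjugators (Equiv.subLeft a) (Equiv.subLeft b)).ncard =
      (if a ∈ (doubling A).range ∧ b ∈ (doubling A).range then
        (Nat.card (doubling A).ker)! * (Nat.card A - Nat.card (doubling A).ker)‼ else 0) +
      if a ∉ (doubling A).range ∧ b ∉ (doubling A).range then (Nat.card A)‼ else 0 := by
  by_cases h : IsConj (Equiv.subLeft a) (Equiv.subLeft b)
  · rw [ncard_conjugators_of_isConj h, card_centralizer_of_sq_eq_one (subLeft_sq a)]
    rw [isConj_subLeft_iff] at h
    by_cases ha : a ∈ (doubling A).range
    · rw [ncard_fixedPoints_subLeft_of_mem ha, if_pos ⟨ha, h.1 ha⟩, if_neg fun hn => hn.1 ha,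
        add_zero]
    · rw [ncard_fixedPoints_subLeft_of_notMem ha, if_neg fun hp => ha hp.1,
        if_pos ⟨ha, h.not.1 ha⟩, Nat.sub_zero, Nat.factorial_zero, one_mul, zero_add]
  · rw [ncard_conjugators_of_not_isConj h]
    rw [isConj_subLeft_iff] at h
    rw [if_neg (by tauto), if_neg (by tauto)]

end Finite

variable [Fintype A]

theorem sum_ncard_conjugators_subLeft_addRight (hA : ∃ x : A, 2 • x ≠ 0) :
    ∑ a : A, ∑ b : A, (conjugators (Equiv.subLeft a) (Equiv.addRight b)).ncard =
      (Nat.card A - Nat.card (doubling A).range) * (Nat.card (doubling A).ker - 1) *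
        (Nat.card A)‼ := by
  simp only [ncard_conjugators_subLeft_addRight hA]
  refine (sum_sum_ite_and (· ∉ (doubling A).range)
    (fun b => b ∈ (doubling A).ker ∧ b ≠ 0) _).trans ?_
  rw [card_notMem_addSubgroup, card_mem_addSubgroup_and_ne_zero]

theorem sum_ncard_conjugators_subLeft_subLeft :
    ∑ a : A, ∑ b : A, (conjugators (Equiv.subLeft a) (Equiv.subLeft b)).ncard =
      Nat.card (doubling A).range ^ 2 *
        ((Nat.card (doubling A).ker)! * (Nat.card A - Nat.card (doubling A).ker)‼) +
      (Nat.card A - Nat.card (doubling A).range) ^ 2 * (Nat.card A)‼ := by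
  simp only [ncard_conjugators_subLeft_subLeft, Finset.sum_add_distrib]
  refine (congrArg₂ (· + ·)
    (sum_sum_ite_and (· ∈ (doubling A).range) (· ∈ (doubling A).range) _)
    (sum_sum_ite_and (· ∉ (doubling A).range) (· ∉ (doubling A).range) _)).trans ?_
  rw [card_notMem_addSubgroup, sq, sq]

end Reflections

section Dihedral

/-- The dihedral group acting on the vertices of the `n`-gon: `r k` is `x ↦ x + k` and `sr k` is
`x ↦ -k - x`, the sign being forced by `sr i * sr j = r (j - i)`. -/
def dihedralPerm (n : ℕ) : DihedralGroup n →* Equiv.Perm (ZMod n) where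
  toFun
    | .r k => Equiv.addRight k
    | .sr k => Equiv.subLeft (-k)
  map_one' := Equiv.addRight_zero
  map_mul' := by
    rintro (i | i) (j | j) <;> ext x
    · change x + (i + j) = x + j + i
      ring
    · change -(j - i) - x = -j - x + i
      ring
    · change -(i + j) - x = -i - (x + j)
      ring
    · change x + (j - i) = -i - (-j - x)
      ring

variable {n : ℕ}

theorem dihedralPerm_r (k : ZMod n) : dihedralPerm n (.r k) = Equiv.addRight k := rfl

theorem dihedralPerm_sr (k : ZMod n) : dihedralPerm n (.sr k) = Equiv.subLeft (-k) := rfl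

theorem exists_dihedralPerm_eq_affine (k : ZMod n) {ε : ZMod n} (hε : ε = 1 ∨ ε = -1) :
    ∃ g, ∀ x, dihedralPerm n g x = ε * x + k := by
  rcases hε with rfl | rfl
  · refine ⟨.r k, fun x => ?_⟩
    rw [one_mul, dihedralPerm_r, Equiv.coe_addRight]
  · refine ⟨.sr (-k), fun x => ?_⟩
    rw [neg_one_mul, neg_add_eq_sub, dihedralPerm_sr, neg_neg, Equiv.subLeft_apply]

theorem exists_affine_eq_dihedralPerm (g : DihedralGroup n) :
    ∃ k ε : ZMod n, (ε = 1 ∨ ε = -1) ∧ ∀ x, dihedralPerm n g x = ε * x + k := by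
  rcases g with k | k
  · refine ⟨k, 1, .inl rfl, fun x => ?_⟩
    rw [one_mul, dihedralPerm_r, Equiv.coe_addRight]
  · refine ⟨-k, -1, .inr rfl, fun x => ?_⟩
    rw [neg_one_mul, neg_add_eq_sub, dihedralPerm_sr, Equiv.subLeft_apply]

theorem sum_dihedralPerm [NeZero n] {M : Type*} [AddCommMonoid M] (f : Equiv.Perm (ZMod n) → M) :
    ∑ g, f (dihedralPerm n g) = ∑ a, f (Equiv.addRight a) + ∑ a, f (Equiv.subLeft a) := by
  rw [← DihedralGroup.equivSum.symm.sum_comp, Fintype.sum_sum_type]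
  congr 1
  exact Equiv.sum_comp (Equiv.neg (ZMod n)) fun a => f (Equiv.subLeft a)

theorem sum_ncard_conjugators_dihedralPerm [NeZero n] (hn : 3 ≤ n) :
    ∑ g, ∑ h, (conjugators (dihedralPerm n g) (dihedralPerm n h)).ncard =
      ∑ d ∈ n.divisors, φ (n / d) ^ 2 * (n / d) ^ d * d ! +
        (2 * ((n - n / n.gcd 2) * (n.gcd 2 - 1) * n‼) +
          ((n / n.gcd 2) ^ 2 * ((n.gcd 2)! * (n - n.gcd 2)‼) + (n - n / n.gcd 2) ^ 2 * n‼)) := by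
  have hA : ∃ x : ZMod n, 2 • x ≠ 0 := by
    refine ⟨1, ?_⟩
    rw [nsmul_one, Ne, ZMod.natCast_eq_zero_iff]
    exact fun h => by have := Nat.le_of_dvd two_pos h; omega
  have addRight_addRight := sum_ncard_conjugators_addRight_addRight (A := ZMod n)
  have subLeft_addRight := sum_ncard_conjugators_subLeft_addRight hA
  have subLeft_subLeft := sum_ncard_conjugators_subLeft_subLeft (A := ZMod n)
  have addRight_subLeft :
      ∑ a : ZMod n, ∑ b : ZMod n, (conjugators (Equiv.addRight a) (Equiv.subLeft b)).ncard =
        ∑ a : ZMod n, ∑ b : ZMod n, (conjugators (Equiv.subLeft a) (Equiv.addRight b)).ncard := by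
    rw [Finset.sum_comm]
    exact Finset.sum_congr rfl fun a _ =>
      Finset.sum_congr rfl fun b _ => ncard_conjugators_comm _ _
  rw [IsAddCyclic.card_nsmulAddMonoidHom_range, IsAddCyclic.card_nsmulAddMonoidHom_ker,
    Nat.card_zmod] at subLeft_addRight subLeft_subLeft
  rw [Nat.card_zmod] at addRight_addRight
  have inner_sum (g : DihedralGroup n) :=
    sum_dihedralPerm fun σ => (conjugators (dihedralPerm n g) σ).ncard
  have outer_sum :=
    sum_dihedralPerm fun σ => ∑ a : ZMod n, (conjugators σ (Equiv.addRight a)).ncard +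
      ∑ a : ZMod n, (conjugators σ (Equiv.subLeft a)).ncard
  simp only [inner_sum, outer_sum, Finset.sum_add_distrib]
  rw [addRight_subLeft, addRight_addRight, subLeft_addRight, subLeft_subLeft]
  ring

theorem sum_ncard_conjugators_dihedralPerm_of_odd [NeZero n] (hn : 3 ≤ n) (hodd : Odd n) :
    ∑ g, ∑ h, (conjugators (dihedralPerm n g) (dihedralPerm n h)).ncard =
      ∑ d ∈ n.divisors, φ (n / d) ^ 2 * (n / d) ^ d * d ! + n ^ 2 * (n - 1)‼ := by
  rw [sum_ncard_conjugators_dihedralPerm hn, Nat.coprime_two_right.2 hodd]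
  simp

theorem sum_ncard_conjugators_dihedralPerm_of_eq_two_mul [NeZero n] (hn : 3 ≤ n) {m : ℕ}
    (hm : n = 2 * m) :
    ∑ g, ∑ h, (conjugators (dihedralPerm n g) (dihedralPerm n h)).ncard =
      ∑ d ∈ n.divisors, φ (n / d) ^ 2 * (n / d) ^ d * d ! + n‼ * (m * (m + 3)) := by
  have gcd_eq : n.gcd 2 = 2 := Nat.gcd_eq_right ⟨m, hm⟩
  have half_eq : n / 2 = m := by omega
  have sub_half_eq : n - m = m := by omega
  have doubleFactorial_eq : n‼ = n * (n - 2)‼ := by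
    obtain ⟨k, rfl⟩ := Nat.exists_eq_add_of_le' (show 2 ≤ n by omega)
    exact Nat.doubleFactorial_add_two k
  rw [sum_ncard_conjugators_dihedralPerm hn, gcd_eq, half_eq, sub_half_eq, doubleFactorial_eq,
    Nat.factorial_two, hm]
  ring

theorem card_similarityClasses_eq_card_doubleCoset_quotient :
    Nat.card (Quot (fun x y : {x : ZMod n → ZMod n // Function.Bijective x} =>
        ∃ (m k δ ε : ZMod n), (δ = 1 ∨ δ = -1) ∧ (ε = 1 ∨ ε = -1) ∧
          ∀ i : ZMod n, y.1 i = ε * x.1 (δ * i + m) + k)) =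
      Nat.card (DoubleCoset.Quotient ((dihedralPerm n).range : Set (Equiv.Perm (ZMod n)))
        (dihedralPerm n).range) := by
  refine Nat.card_congr (Quot.congr Equiv.bijectiveEquiv fun x y => Iff.trans ?_
    DoubleCoset.rel_iff.symm)
  constructor
  · rintro ⟨m, k, δ, ε, hδ, hε, h⟩
    obtain ⟨g, hg⟩ := exists_dihedralPerm_eq_affine m hδ
    obtain ⟨g', hg'⟩ := exists_dihedralPerm_eq_affine k hε
    refine ⟨_, ⟨g', rfl⟩, _, ⟨g, rfl⟩, Equiv.ext fun i => (h i).trans ?_⟩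
    rw [← hg, ← hg']
    rfl
  · rintro ⟨_, ⟨g', rfl⟩, _, ⟨g, rfl⟩, h⟩
    obtain ⟨k, ε, hε, hk⟩ := exists_affine_eq_dihedralPerm g'
    obtain ⟨m, δ, hδ, hm⟩ := exists_affine_eq_dihedralPerm g
    refine ⟨m, k, δ, ε, hδ, hε, fun i => ?_⟩
    rw [← hm, ← hk]
    exact Equiv.congr_fun h i

end Dihedral

/-- Theorem 3 (cycles up to rotation and reflection): the number of equivalence
classes of bijections `x : ZMod n → ZMod n` (cyclic strings encoding
Hamiltonian-cycle subgraphs of `K_n`) under the relation identifying `x` and `y`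
when `y i = ε * x (δ * i + m) + k` for some `m, k : ZMod n` and signs
`δ, ε = ±1`, equals
`(1/(4n²)) * (Σ_{d ∣ n} φ(n/d)² (n/d)^d d! + (if n even then n!!·n(n+6)/4 else n²(n-1)!!))`. -/
theorem cycles_similarity_classes (n : ℕ) (hn : 3 ≤ n) :
    (Nat.card (Quot (fun x y : {x : ZMod n → ZMod n // Function.Bijective x} =>
        ∃ (m k δ ε : ZMod n), (δ = 1 ∨ δ = -1) ∧ (ε = 1 ∨ ε = -1) ∧
          ∀ i : ZMod n, y.1 i = ε * x.1 (δ * i + m) + k)) : ℚ) =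
      (1 / (4 * (n : ℚ) ^ 2)) *
        ((∑ d ∈ n.divisors, (Nat.totient (n / d)) ^ 2 * (n / d) ^ d * d ! : ℕ) +
          if Even n then (Nat.doubleFactorial n * n * (n + 6) : ℚ) / 4
          else (n ^ 2 * Nat.doubleFactorial (n - 1) : ℕ)) := by
  have : NeZero n := ⟨by omega⟩
  have denom_ne_zero : 4 * (n : ℚ) ^ 2 ≠ 0 :=
    mul_ne_zero four_ne_zero (pow_ne_zero 2 (NeZero.ne _))
  have burnside := card_doubleCoset_quotient_mul_card (dihedralPerm n) (dihedralPerm n)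
  rw [Finset.sum_comm, DihedralGroup.nat_card,
    ← card_similarityClasses_eq_card_doubleCoset_quotient] at burnside
  rw [one_div, eq_inv_mul_iff_mul_eq₀ denom_ne_zero]
  split_ifs with hpar
  · obtain ⟨m, hm⟩ := even_iff_exists_two_mul.1 hpar
    rw [sum_ncard_conjugators_dihedralPerm_of_eq_two_mul hn hm] at burnside
    have cast_burnside := congrArg (Nat.cast : ℕ → ℚ) burnside
    have cast_hm : (n : ℚ) = 2 * m := by rw [hm, Nat.cast_mul, Nat.cast_two]
    rw [Nat.cast_add] at cast_burnside
    push_cast [cast_hm] at cast_burnside ⊢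
    linear_combination cast_burnside
  · rw [sum_ncard_conjugators_dihedralPerm_of_odd hn (Nat.not_even_iff_odd.1 hpar)] at burnside
    rw [← Nat.cast_add, ← burnside]
    push_cast
    ring
end

section
/- Let n ≥ 3 be an integer and let m, k ∈ {0, 1, …, n-1} (regarded as elements of ZMod n). If there exists a bijection x : ZMod n → ZMod n satisfying x i = x (i + m) + k for all i : ZMod n, then gcd(m, n) = gcd(k, n). -/
/-! The orbits of translation by `m` on `ZMod n` are the cosets of the subgroup generated by `m`, so
their number is the index `gcd(m, n)`. A string fixed by `(c^m, r^k)` conjugates translation by `m`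
to translation by `-k`, and conjugate permutations have equally many orbits. For `n = 0` both gcds
are absolute values, and an index of `0` stands for infinitely many orbits. -/

open AddSubgroup
open scoped AddConstMap

section Translation

variable {G H : Type*} [AddGroup G] [AddGroup H] {a : G} {b : H}

theorem neg_add_mem_zmultiples_iff_of_injective {f : G →+c[a, b] H}
    (f_injective : Function.Injective f) (i j : G) :
    -f i + f j ∈ zmultiples b ↔ -i + j ∈ zmultiples a := by
  simp only [mem_zmultiples_iff]
  refine exists_congr fun z => ?_
  calc z • b = -f i + f j ↔ f i + z • b = f j := eq_neg_add_iff_add_eq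
    _ ↔ f (i + z • a) = f j := by rw [AddConstMapClass.map_add_zsmul]
    _ ↔ i + z • a = j := f_injective.eq_iff
    _ ↔ z • a = -i + j := eq_neg_add_iff_add_eq.symm

theorem index_zmultiples_eq_of_bijective {f : G →+c[a, b] H} (f_bijective : Function.Bijective f) :
    (zmultiples a).index = (zmultiples b).index := by
  refine Nat.card_congr (Quotient.congr (Equiv.ofBijective f f_bijective) fun i j => ?_)
  change QuotientAddGroup.leftRel _ i j ↔ QuotientAddGroup.leftRel _ (f i) (f j)
  rw [QuotientAddGroup.leftRel_apply, QuotientAddGroup.leftRel_apply,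
    neg_add_mem_zmultiples_iff_of_injective f_bijective.injective]

end Translation

theorem index_zmultiples_intCast (n : ℕ) (a : ℤ) :
    (zmultiples (a : ZMod n)).index = a.gcd n := by
  calc (zmultiples (a : ZMod n)).index
      = ((zmultiples a).map (Int.castAddHom (ZMod n))).index := by
        rw [AddMonoidHom.map_zmultiples, Int.coe_castAddHom]
    _ = (zmultiples a ⊔ zmultiples (n : ℤ)).index := by
        rw [index_map, ZMod.ker_intCastAddHom,
          AddMonoidHom.range_eq_top_of_surjective _ ZMod.intCast_surjective, index_top, mul_one]
    _ = a.gcd n := by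
        rw [Int.zmultiples_sup, Int.index_zmultiples, Int.natAbs_natCast]

theorem gcd_eq_of_fixed_string_general {n : ℕ} {m k : ℤ} {x : ZMod n → ZMod n}
    (x_bijective : Function.Bijective x) (x_fixed : ∀ i, x i = x (i + m) + k) :
    m.gcd n = k.gcd n := by
  let f : ZMod n →+c[(m : ZMod n), -(k : ZMod n)] ZMod n :=
    ⟨x, fun i => eq_add_neg_of_add_eq (x_fixed i).symm⟩
  calc m.gcd n = (zmultiples (m : ZMod n)).index := (index_zmultiples_intCast n m).symm
    _ = (zmultiples (-(k : ZMod n))).index := index_zmultiples_eq_of_bijective (f := f) x_bijective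
    _ = (zmultiples (k : ZMod n)).index := by rw [zmultiples_neg]
    _ = k.gcd n := index_zmultiples_intCast n k

/-- If some bijection `x : ZMod n → ZMod n` is fixed by `(c^m, r^k)`, i.e.
`x i = x (i + m) + k` for all `i`, where `m, k ∈ {0, …, n-1}`, then
`gcd(m, n) = gcd(k, n)`. -/
theorem gcd_eq_of_fixed_string (n : ℕ) (hn : 3 ≤ n) (m k : ℕ)
    (hm : m < n) (hk : k < n)
    (hx : ∃ x : ZMod n → ZMod n, Function.Bijective x ∧
      ∀ i : ZMod n, x i = x (i + (m : ZMod n)) + (k : ZMod n)) :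
    Nat.gcd m n = Nat.gcd k n := by
  obtain ⟨x, x_bijective, x_fixed⟩ := hx
  exact_mod_cast gcd_eq_of_fixed_string_general (m := m) (k := k) x_bijective (mod_cast x_fixed)
end

section
/- Let n ≥ 3 be an integer, let d be a positive divisor of n, and let m, k ∈ {0, 1, …, n-1} satisfy gcd(m, n) = gcd(k, n) = d. Then #{ x : ZMod n → ZMod n bijective | ∀ i : ZMod n, x i = x (i + m) + k } = (n/d)^d * d!. -/
open Nat

/-!
The strings fixed by `(c^m, r^k)` are the bijections intertwining translation by `m` with
translation by `-k`. All orbits of both translations have size `n / d`, so the two are conjugate,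
and composing with the inverse of one intertwining bijection identifies the fixed strings with the
centralizer of a permutation made of `d` cycles of length `n / d`.
-/

open Equiv Function

section MinimalPeriod

variable {α : Type*} {σ τ : Perm α} {r : ℕ}

lemma orderOf_cycleOf_eq_minimalPeriod [Finite α] (σ : Perm α) [DecidableRel σ.SameCycle] (x : α) :
    orderOf (σ.cycleOf x) = minimalPeriod σ x := by
  by_cases hx : σ x = x
  · rw [σ.cycleOf_eq_one_iff.mpr hx, orderOf_one, minimalPeriod_eq_one_iff_isFixedPt.mpr hx]
  have cycleOf_moves : σ.cycleOf x x ≠ x := by rwa [Perm.cycleOf_apply_self]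
  refine Nat.dvd_right_iff_eq.mp fun j ↦ ?_
  calc orderOf (σ.cycleOf x) ∣ j
    _ ↔ σ.cycleOf x ^ j = 1 := orderOf_dvd_iff_pow_eq_one
    _ ↔ (σ ^ j) x = x := by
      rw [(σ.isCycle_cycleOf hx).pow_eq_one_iff' cycleOf_moves, Perm.cycleOf_pow_apply_self]
    _ ↔ IsPeriodicPt σ j x := by rw [IsPeriodicPt, IsFixedPt, Perm.iterate_eq_pow]
    _ ↔ minimalPeriod σ x ∣ j := isPeriodicPt_iff_minimalPeriod_dvd

lemma exists_minimalPeriod_eq_of_mem_cycleType [Fintype α] [DecidableEq α] {c : ℕ}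
    (hc : c ∈ σ.cycleType) : ∃ x, minimalPeriod σ x = c := by
  obtain ⟨f, hf, rfl⟩ := Multiset.mem_map.mp (σ.cycleType_def ▸ hc)
  have hf_cycle := (Perm.mem_cycleFactorsFinset_iff.mp hf).1
  obtain ⟨x, hx⟩ := hf_cycle.nonempty_support
  refine ⟨x, ?_⟩
  rw [← orderOf_cycleOf_eq_minimalPeriod, ← Perm.cycle_is_cycleOf hx hf, hf_cycle.orderOf,
    Function.comp_apply]

lemma eq_one_of_forall_minimalPeriod_eq_one (hσ : ∀ x, minimalPeriod σ x = 1) : σ = 1 :=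
  Equiv.ext fun x ↦ minimalPeriod_eq_one_iff_isFixedPt.mp (hσ x)

-- The period `1` is excluded because `cycleType` does not record fixed points.
lemma sum_cycleType_of_forall_minimalPeriod_eq [Fintype α] [DecidableEq α]
    (hσ : ∀ x, minimalPeriod σ x = r) (hr : r ≠ 1) : σ.cycleType.sum = Fintype.card α := by
  have support_eq : σ.support = Finset.univ := Finset.eq_univ_of_forall fun x ↦
    Perm.mem_support.mpr fun hx ↦ hr (hσ x ▸ minimalPeriod_eq_one_iff_isFixedPt.mpr hx)
  rw [Perm.sum_cycleType, support_eq, Finset.card_univ]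

lemma cycleType_of_forall_minimalPeriod_eq [Fintype α] [DecidableEq α]
    (hσ : ∀ x, minimalPeriod σ x = r) (hr : r ≠ 1) :
    σ.cycleType = Multiset.replicate (Fintype.card α / r) r := by
  have mem_eq : ∀ c ∈ σ.cycleType, c = r := fun c hc ↦ by
    obtain ⟨x, rfl⟩ := exists_minimalPeriod_eq_of_mem_cycleType hc
    exact hσ x
  refine Multiset.eq_replicate.mpr ⟨?_, mem_eq⟩
  rcases isEmpty_or_nonempty α with _ | ⟨⟨x⟩⟩
  · simp [Subsingleton.elim σ 1]
  have r_pos : 0 < r := hσ x ▸ minimalPeriod_pos_of_mem_periodicPts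
    (σ.injective.mem_periodicPts x)
  have card_eq := sum_cycleType_of_forall_minimalPeriod_eq hσ hr
  rw [Multiset.eq_replicate_card.mpr mem_eq, Multiset.sum_replicate, smul_eq_mul] at card_eq
  exact (Nat.div_eq_of_eq_mul_left r_pos card_eq.symm).symm

lemma nat_card_centralizer_of_forall_minimalPeriod_eq [Finite α]
    (hσ : ∀ x, minimalPeriod σ x = r) :
    Nat.card (Subgroup.centralizer {σ}) = r ^ (Nat.card α / r) * (Nat.card α / r)! := by
  classical
  have := Fintype.ofFinite α
  rw [Perm.nat_card_centralizer, Nat.card_eq_fintype_card]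
  by_cases hr : r = 1
  · subst hr
    simp [eq_one_of_forall_minimalPeriod_eq_one hσ]
  rw [sum_cycleType_of_forall_minimalPeriod_eq hσ hr, cycleType_of_forall_minimalPeriod_eq hσ hr,
    Nat.sub_self, Nat.factorial_zero, one_mul, Multiset.prod_replicate]
  rcases eq_or_ne (Fintype.card α / r) 0 with no_cycles | has_cycles
  · simp [no_cycles]
  · simp [Multiset.toFinset_replicate, has_cycles]

lemma isConj_of_forall_minimalPeriod_eq [Finite α]
    (hσ : ∀ x, minimalPeriod σ x = r) (hτ : ∀ x, minimalPeriod τ x = r) : IsConj σ τ := by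
  classical
  have := Fintype.ofFinite α
  by_cases hr : r = 1
  · subst hr
    rw [eq_one_of_forall_minimalPeriod_eq_one hσ, eq_one_of_forall_minimalPeriod_eq_one hτ]
  · rw [Perm.isConj_iff_cycleType_eq, cycleType_of_forall_minimalPeriod_eq hσ hr,
      cycleType_of_forall_minimalPeriod_eq hτ hr]

end MinimalPeriod

section Semiconj

variable {α β : Type*} {σ : Perm α} {τ : Perm β} {r : ℕ}

lemma minimalPeriod_eq_of_semiconj {f : α → β} {s : α → α} {t : β → β} (f_inj : Injective f)
    (hf : Semiconj f s t) (x : α) : minimalPeriod s x = minimalPeriod t (f x) :=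
  minimalPeriod_eq_minimalPeriod_iff.mpr fun n ↦ by
    rw [IsPeriodicPt, IsPeriodicPt, IsFixedPt, IsFixedPt, ← (hf.iterate_right n).eq,
      f_inj.eq_iff]

lemma exists_equiv_semiconj [Finite α] [Finite β] (hcard : Nat.card α = Nat.card β)
    (hσ : ∀ x, minimalPeriod σ x = r) (hτ : ∀ y, minimalPeriod τ y = r) :
    ∃ e : α ≃ β, Semiconj e σ τ := by
  obtain ⟨f⟩ := Finite.card_eq.mp hcard
  have f_semiconj : Semiconj f (f.symm.permCongr τ) τ := fun x ↦ by simp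
  have pullback_period (x : α) : minimalPeriod (f.symm.permCongr τ) x = r :=
    (minimalPeriod_eq_of_semiconj f.injective f_semiconj x).trans (hτ (f x))
  obtain ⟨g, hg⟩ := isConj_iff.mp (isConj_of_forall_minimalPeriod_eq hσ pullback_period)
  have g_semiconj : Semiconj g σ (f.symm.permCongr τ) := fun x ↦ by simp [← hg]
  exact ⟨g.trans f, f_semiconj.comp_left g_semiconj⟩

lemma nat_card_equiv_semiconj_eq_nat_card_centralizer (e : α ≃ β) (he : Semiconj e σ τ) :
    Nat.card {x : α ≃ β // Semiconj x σ τ} = Nat.card (Subgroup.centralizer {σ}) := by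
  refine Nat.card_congr <| (Equiv.equivCongr (Equiv.refl α) e.symm).subtypeEquiv fun x ↦ ?_
  rw [Subgroup.mem_centralizer_singleton_iff, Equiv.ext_iff]
  refine forall_congr' fun i ↦ ?_
  have symm_apply (y : β) : e.symm (τ y) = σ (e.symm y) :=
    he.inverse_left e.left_inv e.right_inv y
  calc x (σ i) = τ (x i)
    _ ↔ e.symm (x (σ i)) = e.symm (τ (x i)) := e.symm.apply_eq_iff_eq.symm
    _ ↔ e.symm (x (σ i)) = σ (e.symm (x i)) := by rw [symm_apply]

lemma nat_card_bijective_semiconj [Finite α] [Finite β] (hcard : Nat.card α = Nat.card β)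
    (hσ : ∀ x, minimalPeriod σ x = r) (hτ : ∀ y, minimalPeriod τ y = r) :
    Nat.card {x : α → β // Bijective x ∧ Semiconj x σ τ} =
      r ^ (Nat.card α / r) * (Nat.card α / r)! := by
  obtain ⟨e, he⟩ := exists_equiv_semiconj hcard hσ hτ
  rw [← nat_card_centralizer_of_forall_minimalPeriod_eq hσ,
    ← nat_card_equiv_semiconj_eq_nat_card_centralizer e he]
  exact Nat.card_congr <| (Equiv.subtypeSubtypeEquivSubtypeInter _ _).symm.trans <|
    Equiv.bijectiveEquiv.subtypeEquiv fun _ ↦ Iff.rfl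

end Semiconj

lemma minimalPeriod_addRight {G : Type*} [AddGroup G] (a x : G) :
    minimalPeriod (Equiv.addRight a) x = addOrderOf a := by
  refine minimalPeriod_eq_minimalPeriod_iff.mpr fun n ↦ ?_
  simp [IsPeriodicPt, IsFixedPt]

theorem card_fixed_strings_cm_rk_general {G H : Type*} [AddGroup G] [AddGroup H] [Finite G]
    (hcard : Nat.card G = Nat.card H) {a : G} {b : H} (hab : addOrderOf a = addOrderOf b) :
    Nat.card {x : G → H // Bijective x ∧ ∀ i, x i = x (i + a) + b} =
      addOrderOf a ^ (Nat.card G / addOrderOf a) * (Nat.card G / addOrderOf a)! := by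
  have : Finite H := Nat.finite_of_card_ne_zero (hcard ▸ Nat.card_pos.ne')
  have semiconj_iff (x : G → H) :
      (∀ i, x i = x (i + a) + b) ↔ Semiconj x (Equiv.addRight a) (Equiv.addRight (-b)) :=
    forall_congr' fun i ↦ by
      rw [Equiv.coe_addRight, Equiv.coe_addRight, eq_add_neg_iff_add_eq, eq_comm]
  simp only [semiconj_iff]
  exact nat_card_bijective_semiconj hcard (minimalPeriod_addRight a) fun y ↦ by
    rw [minimalPeriod_addRight, addOrderOf_neg, hab]

lemma addOrderOf_natCast_of_gcd_eq {n m d : ℕ} [NeZero n] (hd : Nat.gcd m n = d) :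
    addOrderOf (m : ZMod n) = n / d := by
  rw [ZMod.addOrderOf_coe m (NeZero.ne n), Nat.gcd_comm, hd]

/-- If `d` is a positive divisor of `n` and `m, k ∈ {0, …, n-1}` satisfy
`gcd(m, n) = gcd(k, n) = d`, then the number of bijections `x : ZMod n → ZMod n`
fixed by `(c^m, r^k)` (i.e. with `x i = x (i + m) + k` for all `i`) is
`(n/d)^d * d!`. -/
theorem card_fixed_strings_cm_rk (n : ℕ) (hn : 3 ≤ n) (d : ℕ) (hd : 0 < d)
    (hdvd : d ∣ n) (m k : ℕ) (hm : m < n) (hk : k < n)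
    (hgm : Nat.gcd m n = d) (hgk : Nat.gcd k n = d) :
    Nat.card {x : ZMod n → ZMod n // Function.Bijective x ∧
        ∀ i : ZMod n, x i = x (i + (m : ZMod n)) + (k : ZMod n)} =
      (n / d) ^ d * d ! := by
  have : NeZero n := ⟨by omega⟩
  have order_m := addOrderOf_natCast_of_gcd_eq hgm
  rw [card_fixed_strings_cm_rk_general rfl (order_m.trans (addOrderOf_natCast_of_gcd_eq hgk).symm),
    order_m, Nat.card_zmod, Nat.div_div_self hdvd (NeZero.ne n)]
end

section
/- Let n ≥ 3 be an integer, let m, k : ZMod n, and suppose there exists a bijection x : ZMod n → ZMod n satisfying x i = -(x (i + m)) - k for all i : ZMod n. Then n is even, m = n/2, and k is odd (i.e., the integer representative of k in {0, …, n-1} is odd). -/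
/-!
Apply the relation twice to get `x (i + 2m) = x i`, so injectivity gives `2m = 0`. The label map
`y ↦ -y - k` is the identity only if every label is its own negative, and it fixes the label `-j`
when `k = 2j`; at the position carrying a fixed label, the shift by `m` acts trivially, so `m = 0`.
-/

section FixedString

variable {G A : Type*} [AddMonoid G] [AddCommGroup A] {x : G → A} {m : G} {k : A}

theorem shift_add_self_eq_zero (hinj : Function.Injective x)
    (hfix : ∀ i, x i = -(x (i + m)) - k) : m + m = 0 := by
  have hperiod : x (0 + m + m) = x 0 := by
    rw [hfix 0, hfix (0 + m)]
    abel
  simpa using hinj hperiod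

theorem add_self_eq_zero_of_neg_sub_eq (hneg : ∀ a : A, a = -a - k) (a : A) : a + a = 0 := by
  have hk : k = 0 := by simpa using hneg 0
  exact add_eq_zero_iff_eq_neg.mpr (by simpa [hk] using hneg a)

theorem shift_ne_zero (hsurj : Function.Surjective x)
    (hfix : ∀ i, x i = -(x (i + m)) - k) {a : A} (ha : a + a ≠ 0) : m ≠ 0 := by
  rintro rfl
  have hneg : ∀ b : A, b = -b - k := hsurj.forall.mpr (by simpa only [add_zero] using hfix)
  exact ha (add_self_eq_zero_of_neg_sub_eq hneg a)

theorem shift_eq_zero_of_even [IsLeftCancelAdd G] (hbij : Function.Bijective x)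
    (hfix : ∀ i, x i = -(x (i + m)) - k) (hk : Even k) : m = 0 := by
  obtain ⟨j, rfl⟩ := hk
  obtain ⟨i, hi⟩ := hbij.surjective (-j)
  have hsame : x (i + m) = x i := by
    calc x (i + m) = -x i - (j + j) := by rw [hfix i]; abel
      _ = x i := by rw [hi]; abel
  exact add_eq_left.mp (hbij.injective hsame)

theorem fixed_string_cm_srk_necessary_general [IsLeftCancelAdd G] (hA : ∃ a : A, a + a ≠ 0)
    (hx : ∃ x : G → A, Function.Bijective x ∧ ∀ i, x i = -(x (i + m)) - k) :
    addOrderOf m = 2 ∧ ¬ Even k := by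
  obtain ⟨a, ha⟩ := hA
  obtain ⟨x, hbij, hfix⟩ := hx
  have hm : m ≠ 0 := shift_ne_zero hbij.surjective hfix ha
  have hmm : 2 • m = 0 := by rw [two_nsmul, shift_add_self_eq_zero hbij.injective hfix]
  exact ⟨addOrderOf_eq_prime hmm hm, fun hk ↦ hm (shift_eq_zero_of_even hbij hfix hk)⟩

end FixedString

section ZMod

variable {n : ℕ}

theorem two_mul_zmod_val_of_addOrderOf_eq_two {m : ZMod n} (hm : addOrderOf m = 2) :
    2 * m.val = n := by
  have hm0 : m ≠ 0 := (addOrderOf_eq_prime_iff.mp hm).2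
  exact ((ZMod.neg_eq_self_iff m).mp (neg_eq_self_of_addOrderOf_eq_two hm)).resolve_left hm0

theorem zmod_eq_natCast_half_of_addOrderOf_eq_two [NeZero n] {m : ZMod n}
    (hm : addOrderOf m = 2) : m = ((n / 2 : ℕ) : ZMod n) := by
  have hval : m.val = n / 2 := by
    have := two_mul_zmod_val_of_addOrderOf_eq_two hm
    omega
  rw [← hval, ZMod.natCast_zmod_val]

theorem odd_zmod_val_of_not_even [NeZero n] {k : ZMod n} (hk : ¬ Even k) : Odd k.val := by
  refine Nat.not_even_iff_odd.mp fun hval ↦ hk ?_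
  simpa only [ZMod.natCast_zmod_val] using hval.natCast (α := ZMod n)

end ZMod

/-- If some bijection `x : ZMod n → ZMod n` is fixed by `(c^m, s r^k)`, i.e.
`x i = -(x (i + m)) - k` for all `i`, then `n` is even, `m = n/2`, and the
integer representative of `k` is odd. -/
theorem fixed_string_cm_srk_necessary (n : ℕ) (hn : 3 ≤ n) (m k : ZMod n)
    (hx : ∃ x : ZMod n → ZMod n, Function.Bijective x ∧
      ∀ i : ZMod n, x i = -(x (i + m)) - k) :
    Even n ∧ m = ((n / 2 : ℕ) : ZMod n) ∧ Odd (ZMod.val k) := by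
  have : Fact (2 < n) := ⟨hn⟩
  have : NeZero n := ⟨by omega⟩
  have hone : (1 : ZMod n) + 1 ≠ 0 := fun h ↦
    ZMod.neg_one_ne_one (neg_eq_of_add_eq_zero_left h)
  obtain ⟨hm, hk⟩ := fixed_string_cm_srk_necessary_general ⟨1, hone⟩ hx
  have heven : Even n :=
    even_iff_exists_two_mul.mpr ⟨m.val, (two_mul_zmod_val_of_addOrderOf_eq_two hm).symm⟩
  exact ⟨heven, zmod_eq_natCast_half_of_addOrderOf_eq_two hm, odd_zmod_val_of_not_even hk⟩
end

section
/- Let n ≥ 3 be an integer. Then Σ_{m : ZMod n} Σ_{k : ZMod n} #{ x : ZMod n → ZMod n bijective | ∀ i : ZMod n, x i = -(x (i + m)) - k } equals (n/2) * n!! if n is even and 0 if n is odd. -/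
open Nat

/-!
A string fixed by `(c^m, s r^k)` is a permutation of the labels that conjugates the translation
`i ↦ i + m` into the reflection `l ↦ -k - l`. These two permutations of a finite abelian group `A`
of exponent greater than `2` are conjugate only if `m` has order exactly `2` and `k` is not a
double: a fixed label would give a fixed position, hence `m = 0`. Conversely, both are then
fixed-point-free involutions, so they are conjugate, and the conjugating permutations form a coset
of a centralizer, which has `|A|‼` elements.
-/

section SemiconjBy

variable {G : Type*} [Group G] {a b c : G}

theorem mem_centralizer_iff_semiconjBy_mul (h : SemiconjBy c a b) {y : G} :
    y ∈ Subgroup.centralizer {a} ↔ SemiconjBy (c * y) a b := by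
  rw [Subgroup.mem_centralizer_singleton_iff, SemiconjBy, ← mul_assoc b, ← h.eq, mul_assoc,
    mul_assoc, mul_right_inj]

theorem nat_card_semiconjBy_of_isConj (h : IsConj a b) :
    Nat.card {x : G // SemiconjBy x a b} = Nat.card (Subgroup.centralizer {a}) := by
  obtain ⟨c, hc⟩ := h
  exact Nat.card_congr ((Equiv.mulLeft (c : G)).subtypeEquiv fun _ =>
    mem_centralizer_iff_semiconjBy_mul hc).symm

end SemiconjBy

section FixedPointFree

variable {α : Type*} {p : ℕ} [Fact p.Prime] {σ τ : Equiv.Perm α}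

theorem cycleType_eq_replicate_of_pow_prime_eq_one [Fintype α] [DecidableEq α]
    (hσ : σ ^ p = 1) (hfix : ∀ i, σ i ≠ i) :
    σ.cycleType = Multiset.replicate (Fintype.card α / p) p := by
  have hrep : σ.cycleType = Multiset.replicate σ.cycleType.card p :=
    Multiset.eq_replicate_card.mpr (Equiv.Perm.pow_prime_eq_one_iff.mp hσ)
  have hsupp : σ.support = Finset.univ := Finset.eq_univ_of_forall fun i => by simpa using hfix i
  have hcard : σ.cycleType.card * p = Fintype.card α := by
    rw [← Finset.card_univ, ← hsupp, ← σ.sum_cycleType, hrep]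
    simp only [Multiset.card_replicate, Multiset.sum_replicate, smul_eq_mul]
  rwa [← hcard, Nat.mul_div_cancel _ (Fact.out : p.Prime).pos]

variable [Finite α]

theorem prime_dvd_nat_card_of_pow_eq_one (hσ : σ ^ p = 1) (hfix : ∀ i, σ i ≠ i) :
    p ∣ Nat.card α := by
  classical
  have := Fintype.ofFinite α
  have hsupp : σ.supportᶜ = ∅ := by simpa [Finset.ext_iff] using hfix
  have hmod := Equiv.Perm.card_compl_support_modEq (n := 1) (by simpa using hσ)
  rw [hsupp, Finset.card_empty] at hmod
  rw [Nat.card_eq_fintype_card]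
  exact (Nat.modEq_zero_iff_dvd).mp hmod.symm

theorem isConj_of_pow_prime_eq_one (hσ : σ ^ p = 1) (hσfix : ∀ i, σ i ≠ i) (hτ : τ ^ p = 1)
    (hτfix : ∀ i, τ i ≠ i) : IsConj σ τ := by
  classical
  have := Fintype.ofFinite α
  rw [Equiv.Perm.isConj_iff_cycleType_eq, cycleType_eq_replicate_of_pow_prime_eq_one hσ hσfix,
    cycleType_eq_replicate_of_pow_prime_eq_one hτ hτfix]

theorem nat_card_centralizer_of_pow_prime_eq_one (hσ : σ ^ p = 1) (hfix : ∀ i, σ i ≠ i) :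
    Nat.card (Subgroup.centralizer {σ}) = p ^ (Nat.card α / p) * (Nat.card α / p)! := by
  classical
  have := Fintype.ofFinite α
  have hmul : Nat.card α / p * p = Nat.card α :=
    Nat.div_mul_cancel (prime_dvd_nat_card_of_pow_eq_one hσ hfix)
  rw [Equiv.Perm.nat_card_centralizer, cycleType_eq_replicate_of_pow_prime_eq_one hσ hfix,
    ← Nat.card_eq_fintype_card, Multiset.sum_replicate, Multiset.prod_replicate, smul_eq_mul, hmul,
    Nat.sub_self, Nat.factorial_zero, one_mul]
  cases Nat.card α / p with
  | zero => simp
  | succ h => rw [Multiset.toFinset_replicate, if_neg h.succ_ne_zero]; simp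

theorem nat_card_centralizer_of_sq_eq_one (hσ : σ ^ 2 = 1) (hfix : ∀ i, σ i ≠ i) :
    Nat.card (Subgroup.centralizer {σ}) = (Nat.card α)‼ := by
  rw [nat_card_centralizer_of_pow_prime_eq_one hσ hfix, ← Nat.doubleFactorial_two_mul,
    Nat.mul_div_cancel' (prime_dvd_nat_card_of_pow_eq_one hσ hfix)]

end FixedPointFree

section FixedStrings

variable {A : Type*} [AddCommGroup A]

/-- The strings with positions and labels in `A`, each label occurring exactly once, that are fixed
by `(c^m, s r^k)`; the cyclic strings of length `n` are the case `A = ZMod n`. -/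
def fixedStrings (m k : A) : Set (A → A) :=
  {x | Function.Bijective x ∧ ∀ i, x i = -(x (i + m)) - k}

variable {m k : A} {x : A → A}

theorem apply_add_of_mem_fixedStrings (hx : x ∈ fixedStrings m k) (i : A) :
    x (i + m) = -k - x i := by
  rw [hx.2 i]
  abel

theorem two_nsmul_eq_zero_of_mem_fixedStrings (hx : x ∈ fixedStrings m k) : 2 • m = 0 := by
  have hperiod : x (0 + m + m) = x 0 := by
    simp only [apply_add_of_mem_fixedStrings hx, sub_sub_cancel]
  simpa [two_nsmul] using hx.1.injective hperiod

theorem eq_zero_of_mem_fixedStrings (hx : x ∈ fixedStrings m k)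
    (hk : k ∈ (nsmulAddMonoidHom (α := A) 2).range) : m = 0 := by
  obtain ⟨l, rfl⟩ := hk
  obtain ⟨i, hi⟩ := hx.1.surjective (-l)
  have hfix : x (i + m) = x i := by
    rw [apply_add_of_mem_fixedStrings hx, hi, nsmulAddMonoidHom_apply]
    abel
  simpa using hx.1.injective hfix

theorem fixedStrings_zero_eq_empty (hA : ∃ a : A, 2 • a ≠ 0) (k : A) :
    fixedStrings 0 k = ∅ := by
  refine Set.eq_empty_of_forall_notMem fun x hx => ?_
  have hdouble (l : A) : 2 • l = -k := by
    obtain ⟨i, rfl⟩ := hx.1.surjective l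
    have hi := apply_add_of_mem_fixedStrings hx i
    rw [add_zero] at hi
    rw [two_nsmul, eq_sub_iff_add_eq.mp hi]
  obtain ⟨a, ha⟩ := hA
  exact ha ((hdouble a).trans ((hdouble 0).symm.trans (nsmul_zero 2)))

theorem coe_mem_fixedStrings_iff_semiconjBy {c : Equiv.Perm A} :
    ⇑c ∈ fixedStrings m k ↔ SemiconjBy c (Equiv.addRight m) (Equiv.subLeft (-k)) := by
  constructor
  · exact fun hc => Equiv.ext (apply_add_of_mem_fixedStrings hc)
  · refine fun hc => ⟨c.bijective, fun i => ?_⟩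
    have hi : c (i + m) = -k - c i := Equiv.congr_fun hc.eq i
    rw [hi]
    abel

theorem nat_card_fixedStrings_eq_nat_card_semiconjBy (m k : A) :
    Nat.card (fixedStrings m k) =
      Nat.card {c : Equiv.Perm A // SemiconjBy c (Equiv.addRight m) (Equiv.subLeft (-k))} :=
  Nat.card_congr
    { toFun x := ⟨.ofBijective x.1 x.2.1, coe_mem_fixedStrings_iff_semiconjBy.mp x.2⟩
      invFun c := ⟨c.1, coe_mem_fixedStrings_iff_semiconjBy.mpr c.2⟩
      left_inv _ := rfl
      right_inv _ := Subtype.ext (Equiv.ext fun _ => rfl) }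

theorem nat_card_fixedStrings_eq_doubleFactorial [Finite A] (hm : 2 • m = 0) (hm0 : m ≠ 0)
    (hk : k ∉ (nsmulAddMonoidHom (α := A) 2).range) :
    Nat.card (fixedStrings m k) = (Nat.card A)‼ := by
  have htrans : Equiv.addRight m ^ 2 = 1 :=
    Equiv.ext fun i => by simp [pow_two, add_assoc, ← two_nsmul, hm]
  have htrans_fix (i : A) : Equiv.addRight m i ≠ i := by simpa using hm0
  have hrefl : Equiv.subLeft (-k) ^ 2 = 1 := Equiv.ext fun l => by simp [pow_two]
  have hrefl_fix (l : A) : Equiv.subLeft (-k) l ≠ l := fun hl =>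
    hk ⟨-l, by
      rw [nsmulAddMonoidHom_apply, smul_neg, two_nsmul, ← sub_eq_iff_eq_add.mp hl, neg_neg]⟩
  rw [nat_card_fixedStrings_eq_nat_card_semiconjBy, nat_card_semiconjBy_of_isConj
    (isConj_of_pow_prime_eq_one htrans htrans_fix hrefl hrefl_fix),
    nat_card_centralizer_of_sq_eq_one htrans htrans_fix]

theorem nat_card_fixedStrings_eq_ite [Finite A] (hA : ∃ a : A, 2 • a ≠ 0) (m k : A)
    [Decidable ((m ∈ (nsmulAddMonoidHom (α := A) 2).ker ∧ m ≠ 0) ∧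
      k ∉ (nsmulAddMonoidHom (α := A) 2).range)] :
    Nat.card (fixedStrings m k) =
      if (m ∈ (nsmulAddMonoidHom (α := A) 2).ker ∧ m ≠ 0) ∧
        k ∉ (nsmulAddMonoidHom (α := A) 2).range then (Nat.card A)‼ else 0 := by
  split_ifs with h
  · exact nat_card_fixedStrings_eq_doubleFactorial h.1.1 h.1.2 h.2
  · rw [Nat.card_coe_set_eq, Set.ncard_eq_zero]
    refine Set.eq_empty_of_forall_notMem fun x hx => h ?_
    have hm0 : m ≠ 0 := by
      rintro rfl
      exact (fixedStrings_zero_eq_empty hA k).subset hx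
    exact ⟨⟨two_nsmul_eq_zero_of_mem_fixedStrings hx, hm0⟩,
      fun hk => hm0 (eq_zero_of_mem_fixedStrings hx hk)⟩

end FixedStrings

theorem total_fixed_strings_cm_srk_general {A : Type*} [AddCommGroup A] [Fintype A]
    (hA : ∃ a : A, 2 • a ≠ 0) :
    ∑ m : A, ∑ k : A,
        Nat.card {x : A → A // Function.Bijective x ∧ ∀ i, x i = -(x (i + m)) - k} =
      (Nat.card (nsmulAddMonoidHom (α := A) 2).ker - 1) *
        (Nat.card A - Nat.card (nsmulAddMonoidHom (α := A) 2).range) * (Nat.card A)‼ := by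
  classical
  set K := (nsmulAddMonoidHom (α := A) 2).ker
  set D := (nsmulAddMonoidHom (α := A) 2).range
  have hshifts : ({m | m ∈ K ∧ m ≠ 0} : Finset A).card = Nat.card K - 1 := by
    rw [← Finset.filter_filter, Finset.filter_ne', Finset.card_erase_of_mem (by simp)]
    simp [Fintype.card_subtype]
  have hlabels : ({k | k ∉ D} : Finset A).card = Nat.card A - Nat.card D := by
    rw [Finset.filter_not, Finset.card_sdiff_of_subset (Finset.filter_subset _ _)]
    simp [Fintype.card_subtype]
  calc
    _ = ∑ m : A, ∑ k : A, if (m ∈ K ∧ m ≠ 0) ∧ k ∉ D then (Nat.card A)‼ else 0 :=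
      Finset.sum_congr rfl fun m _ => Finset.sum_congr rfl fun k _ =>
        nat_card_fixedStrings_eq_ite hA m k
    _ = ∑ q : A × A with (q.1 ∈ K ∧ q.1 ≠ 0) ∧ q.2 ∉ D, (Nat.card A)‼ := by
      rw [Finset.sum_filter, Fintype.sum_prod_type]
    _ = _ := by
      rw [Finset.sum_const, smul_eq_mul, ← hshifts, ← hlabels, ← Finset.card_product,
        ← Finset.filter_product, Finset.univ_product_univ]

theorem zmod_exists_two_nsmul_ne_zero {n : ℕ} (hn : 3 ≤ n) : ∃ a : ZMod n, 2 • a ≠ 0 := by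
  refine ⟨1, fun h => ?_⟩
  have hdvd : n ∣ 2 := (ZMod.natCast_eq_zero_iff 2 n).mp (by simpa using h)
  exact absurd (Nat.le_of_dvd two_pos hdvd) (by omega)

theorem zmod_card_ker_sub_one_mul_card_sub_card_range (n : ℕ) [NeZero n] :
    (Nat.card (nsmulAddMonoidHom (α := ZMod n) 2).ker - 1) *
        (Nat.card (ZMod n) - Nat.card (nsmulAddMonoidHom (α := ZMod n) 2).range) =
      if Even n then n / 2 else 0 := by
  rw [IsAddCyclic.card_nsmulAddMonoidHom_ker, IsAddCyclic.card_nsmulAddMonoidHom_range,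
    Nat.card_zmod]
  split_ifs with hn
  · have hhalf : n / 2 * 2 = n := Nat.div_mul_cancel hn.two_dvd
    rw [Nat.gcd_eq_right hn.two_dvd]
    omega
  · rw [Nat.coprime_two_right.mpr (Nat.not_even_iff_odd.mp hn), Nat.sub_self, zero_mul]

/-- The total number of strings fixed by the elements `(c^m, s r^k)` (cyclically
shift by `m` and replace every label `x` by `-x - k`) is `(n/2)·n!!` if `n` is
even and `0` if `n` is odd. -/
theorem total_fixed_strings_cm_srk (n : ℕ) (hn : 3 ≤ n) [NeZero n] :
    ∑ m : ZMod n, ∑ k : ZMod n,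
        Nat.card {x : ZMod n → ZMod n // Function.Bijective x ∧
          ∀ i : ZMod n, x i = -(x (i + m)) - k} =
      if Even n then (n / 2) * Nat.doubleFactorial n else 0 := by
  rw [total_fixed_strings_cm_srk_general (zmod_exists_two_nsmul_ne_zero hn),
    zmod_card_ker_sub_one_mul_card_sub_card_range, Nat.card_zmod, ite_mul, zero_mul]
end
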